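/- Let K be a global function field of characteristic p containing a primitive q-th root of unity, where q ≠ p is prime, and let 𝔭_K be a prime of K. Then the valuation ring O_{𝔭_K} = {x ∈ K : ord_{𝔭_K} x ≥ 0} is existentially (diophantine) definable over K in the language of rings with parameters from K. -/

import Mathlib

noncomputable section

/-- A normalized (surjective onto `ℤ`) discrete valuation on a field `K`, i.e. a
"prime" of a global function field. -/
structure FFPrime (K : Type) [Field K] where
  ord : K → WithTop ℤ
  ord_zero : ord 0 = ⊤
  ord_ne_top : ∀ x : K, x ≠ 0 → ord x ≠ ⊤
  ord_one : ord 1 = 0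
  ord_mul : ∀ x y : K, ord (x * y) = ord x + ord y
  ord_add : ∀ x y : K, min (ord x) (ord y) ≤ ord (x + y)
  ord_surj : ∀ n : ℤ, ∃ x : K, ord x = (n : WithTop ℤ)

namespace FFPrime

variable {K L : Type} [Field K] [Field L]

/-- `w` lies over `v` along `φ`, with ramification index `e`. -/
def LiesOverWith (w : FFPrime L) (v : FFPrime K) (φ : K →+* L) (e : ℕ) : Prop :=
  0 < e ∧ ∀ x : K, w.ord (φ x) = ((e : ℤ) : WithTop ℤ) * v.ord x

/-- `w` lies over `v` along `φ`. -/
def LiesOver (w : FFPrime L) (v : FFPrime K) (φ : K →+* L) : Prop :=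
  ∃ e : ℕ, w.LiesOverWith v φ e

open Classical in
/-- The ramification index `e(w/v)`. -/
noncomputable def ramIdx (w : FFPrime L) (v : FFPrime K) (φ : K →+* L) : ℕ :=
  if h : ∃ e : ℕ, w.LiesOverWith v φ e then h.choose else 0

/-- The residue field of `v` has exactly `n` elements. -/
def HasResidueCard (v : FFPrime K) (n : ℕ) : Prop :=
  ∃ s : Finset K, s.card = n ∧ (∀ x ∈ s, 0 ≤ v.ord x) ∧
    (∀ x ∈ s, ∀ y ∈ s, x ≠ y → ¬ 0 < v.ord (x - y)) ∧
    (∀ z : K, 0 ≤ v.ord z → ∃ x ∈ s, 0 < v.ord (z - x))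

open Classical in
/-- The residue (relative) degree `f(w/v)`: the unique `f ≥ 1` with
`#κ_w = (#κ_v) ^ f` (residue fields of global function fields are finite). -/
noncomputable def resDeg (w : FFPrime L) (v : FFPrime K) : ℕ :=
  if h : ∃ f : ℕ, 0 < f ∧ ∃ m n : ℕ, 1 < m ∧ v.HasResidueCard m ∧
      w.HasResidueCard n ∧ n = m ^ f then h.choose else 0

/-- `v` splits completely in the extension given by `φ`: every prime above it has
ramification index and residue degree `1`. -/
def SplitsCompletely (v : FFPrime K) (φ : K →+* L) : Prop :=
  ∀ w : FFPrime L, w.LiesOver v φ → w.ramIdx v φ = 1 ∧ w.resDeg v = 1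

/-- `v` is inert in the finite extension `M/K`: there is a unique prime above it, with
ramification index `1` and residue degree `[M : K]`. -/
def IsInert (v : FFPrime K) (M : Type) [Field M] [Algebra K M] : Prop :=
  (∃! w : FFPrime M, w.LiesOver v (algebraMap K M)) ∧
    ∀ w : FFPrime M, w.LiesOver v (algebraMap K M) →
      w.ramIdx v (algebraMap K M) = 1 ∧ w.resDeg v = Module.finrank K M

/-- `v` ramifies in the extension given by `φ`: some prime above it has ramification
index `> 1`. -/
def Ramifies (v : FFPrime K) (φ : K →+* L) : Prop :=
  ∃ w : FFPrime L, w.LiesOver v φ ∧ 2 ≤ w.ramIdx v φ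

/-- `ord_v z ≡ 0 mod q`. -/
def OrdDvd (v : FFPrime K) (q : ℕ) (z : K) : Prop :=
  ∃ n : ℤ, v.ord z = (((q : ℤ) * n : ℤ) : WithTop ℤ)

end FFPrime

/-- A nontrivial (rank one) valuation on a possibly infinite algebraic extension of a
global function field, with values in `ℚ ∪ {∞}`. -/
structure FFVal (B : Type) [Field B] where
  ord : B → WithTop ℚ
  ord_zero : ord 0 = ⊤
  ord_ne_top : ∀ x : B, x ≠ 0 → ord x ≠ ⊤
  ord_one : ord 1 = 0
  ord_mul : ∀ x y : B, ord (x * y) = ord x + ord y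
  ord_add : ∀ x y : B, min (ord x) (ord y) ≤ ord (x + y)
  nontrivial : ∃ x : B, ord x ≠ 0 ∧ ord x ≠ ⊤

/-- The valuation `V` of the big field restricts, up to a normalization factor `c`, to
the (normalized discrete) prime `v` of `K` along `φ`; i.e. `v` is the prime of `K`
lying below `V`. -/
def FFVal.RestrictsTo {K B : Type} [Field K] [Field B] (V : FFVal B) (v : FFPrime K)
    (φ : K →+* B) : Prop :=
  ∃ c : ℚ, 0 < c ∧
    ∀ x : K, V.ord (φ x) = ((c : ℚ) : WithTop ℚ) * WithTop.map (fun n : ℤ => (n : ℚ)) (v.ord x)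

/-- The algebraic extension `B` of the rational function field `F0 = 𝔽_p(t)` is
`q`-bounded: for every valuation of `B`, the `q`-adic valuations of the ramification
indices and residue degrees along every finite subextension are bounded. -/
def IsQBounded (q : ℕ) (F0 B : Type) [Field F0] [Field B] [Algebra F0 B] : Prop :=
  ∀ V : FFVal B, ∃ C : ℕ,
    ∀ L : IntermediateField F0 B, FiniteDimensional F0 L →
      ∀ v0 : FFPrime F0, ∀ vL : FFPrime L,
        V.RestrictsTo v0 (algebraMap F0 B) →
        V.RestrictsTo vL L.val.toRingHom →
        padicValNat q (vL.ramIdx v0 (algebraMap F0 L)) ≤ C ∧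
        padicValNat q (vL.resDeg v0) ≤ C

/-- The prime `v` of `K` has uniformly `q`-bounded ramification in `B`. -/
def UnifQBoundedRam (q : ℕ) {K : Type} [Field K] (B : Type) [Field B] [Algebra K B]
    (v : FFPrime K) : Prop :=
  ∃ C : ℕ, ∀ F : IntermediateField K B, FiniteDimensional K F →
    ∀ w : FFPrime F, w.LiesOver v (algebraMap K F) →
      padicValNat q (w.ramIdx v (algebraMap K F)) ≤ C

/-- The prime `v` of `K` has uniformly absolutely bounded ramification in `B`. -/
def UnifAbsBoundedRam {K : Type} [Field K] (B : Type) [Field B] [Algebra K B]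
    (v : FFPrime K) : Prop :=
  ∃ C : ℕ, ∀ F : IntermediateField K B, FiniteDimensional K F →
    ∀ w : FFPrime F, w.LiesOver v (algebraMap K F) →
      w.ramIdx v (algebraMap K F) ≤ C

/-- The prime `v` of `K` has uniformly `q`-bounded relative (residue) degree in `B`. -/
def UnifQBoundedRes (q : ℕ) {K : Type} [Field K] (B : Type) [Field B] [Algebra K B]
    (v : FFPrime K) : Prop :=
  ∃ C : ℕ, ∀ F : IntermediateField K B, FiniteDimensional K F →
    ∀ w : FFPrime F, w.LiesOver v (algebraMap K F) →
      padicValNat q (w.resDeg v) ≤ C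

/-- The prime `v` of `K` is uniformly `q`-bounded in `B`. -/
def UniformlyQBoundedAt (q : ℕ) {K : Type} [Field K] (B : Type) [Field B] [Algebra K B]
    (v : FFPrime K) : Prop :=
  UnifQBoundedRam q B v ∧ UnifQBoundedRes q B v

/-- The integral closure in `B` of the valuation ring `O_v = {x ∈ K : ord_v x ≥ 0}`. -/
def valIntegralClosure {K : Type} [Field K] (v : FFPrime K) (B : Type) [Field B]
    [Algebra K B] : Set B :=
  {x : B | ∃ P : Polynomial K, P.Monic ∧ (∀ n : ℕ, 0 ≤ v.ord (P.coeff n)) ∧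
    Polynomial.aeval x P = 0}

/-- The integral closure in `B` of the ring `O_{K,S}` of `S`-integers of `K`. -/
def sIntegralClosure {K : Type} [Field K] (S : Set (FFPrime K)) (B : Type) [Field B]
    [Algebra K B] : Set B :=
  {x : B | ∃ P : Polynomial K, P.Monic ∧
    (∀ n : ℕ, ∀ v : FFPrime K, v ∉ S → 0 ≤ v.ord (P.coeff n)) ∧
    Polynomial.aeval x P = 0}

/-- Elements of `B` that are units at every prime of `B` lying over a prime of `S`. -/
def unitsAtS {K : Type} [Field K] (S : Set (FFPrime K)) (B : Type) [Field B]
    [Algebra K B] : Set B :=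
  {x : B | ∀ V : FFVal B, (∃ v ∈ S, V.RestrictsTo v (algebraMap K B)) → V.ord x = 0}

/-- Elements `x` of `B` with `ord (x - 1) > 0` at every prime of `B` lying over a
prime of `S`. -/
def onesAtS {K : Type} [Field K] (S : Set (FFPrime K)) (B : Type) [Field B]
    [Algebra K B] : Set B :=
  {x : B | ∀ V : FFVal B, (∃ v ∈ S, V.RestrictsTo v (algebraMap K B)) → 0 < V.ord (x - 1)}

/-- A subset of a commutative ring is first-order definable in the language of rings
`{0, 1, +, ·}` with parameters from the ring. -/
def FODefinable {R : Type} [CommRing R] (X : Set R) : Prop :=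
  letI : FirstOrder.Ring.CompatibleRing R := FirstOrder.Ring.compatibleRingOfRing R
  Set.Definable₁ (Set.univ : Set R) FirstOrder.Language.ring X

/-- A subset of a commutative ring is existentially (diophantine) definable: it is cut
out by a block of existential quantifiers followed by a system of polynomial equations,
with parameters (coefficients) from the ring. -/
def ExistDefinable {R : Type} [CommRing R] (X : Set R) : Prop :=
  ∃ (k m : ℕ) (P : Fin m → MvPolynomial (Fin (k + 1)) R),
    ∀ x : R, x ∈ X ↔ ∃ y : Fin k → R, ∀ i : Fin m,
      MvPolynomial.eval (Fin.cons x y) (P i) = 0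

/-- Solvability of the norm equation `N(y) = b·x^q + b^q` over (every realization of)
the tower `L₂(a^{1/q})/L₂`, where `L₁ = F((1+(b x^q+b^q)⁻¹)^{1/q})` and
`L₂ = L₁((1+(a+a⁻¹)b⁻¹)^{1/q})`. -/
def NormTower2Solvable (q : ℕ) (F : Type) [Field F] (a b x : F) : Prop :=
  ∀ (M1 : Type) [Field M1] [Algebra F M1] (α1 : M1),
    α1 ^ q = algebraMap F M1 (1 + (b * x ^ q + b ^ q)⁻¹) →
    IntermediateField.adjoin F {α1} = ⊤ →
    ∀ (M2 : Type) [Field M2] [Algebra M1 M2] (α2 : M2),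
      α2 ^ q = algebraMap M1 M2 (algebraMap F M1 (1 + (a + a⁻¹) * b⁻¹)) →
      IntermediateField.adjoin M1 {α2} = ⊤ →
      ∀ (M3 : Type) [Field M3] [Algebra M2 M3] (α3 : M3),
        α3 ^ q = algebraMap M2 M3 (algebraMap M1 M2 (algebraMap F M1 a)) →
        IntermediateField.adjoin M2 {α3} = ⊤ →
        ∃ y : M3, Algebra.norm M2 y = algebraMap M1 M2 (algebraMap F M1 (b * x ^ q + b ^ q))

/-- Solvability of the norm equation `N(y) = b·x^q + b^q` over (every realization of)
the tower `L₄(a^{1/q})/L₄`, where `L₁ = F((1+(b x^q+b^q)⁻¹)^{1/q})`,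
`L₃ = L₁((1+x⁻¹)^{1/q})` and `L₄ = L₃((1+(a+a⁻¹)x⁻¹)^{1/q})`. -/
def NormTower4Solvable (q : ℕ) (F : Type) [Field F] (a b x : F) : Prop :=
  ∀ (M1 : Type) [Field M1] [Algebra F M1] (α1 : M1),
    α1 ^ q = algebraMap F M1 (1 + (b * x ^ q + b ^ q)⁻¹) →
    IntermediateField.adjoin F {α1} = ⊤ →
    ∀ (M3 : Type) [Field M3] [Algebra M1 M3] (α3 : M3),
      α3 ^ q = algebraMap M1 M3 (algebraMap F M1 (1 + x⁻¹)) →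
      IntermediateField.adjoin M1 {α3} = ⊤ →
      ∀ (M4 : Type) [Field M4] [Algebra M3 M4] (α4 : M4),
        α4 ^ q = algebraMap M3 M4 (algebraMap M1 M3 (algebraMap F M1 (1 + (a + a⁻¹) * x⁻¹))) →
        IntermediateField.adjoin M3 {α4} = ⊤ →
        ∀ (M5 : Type) [Field M5] [Algebra M4 M5] (α5 : M5),
          α5 ^ q = algebraMap M4 M5 (algebraMap M3 M4 (algebraMap M1 M3 (algebraMap F M1 a))) →
          IntermediateField.adjoin M4 {α5} = ⊤ →
          ∃ y : M5, Algebra.norm M4 y =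
            algebraMap M3 M4 (algebraMap M1 M3 (algebraMap F M1 (b * x ^ q + b ^ q)))

/-- Unsolvability of the norm equation `N(y) = b·x^q + b^q` over (every realization of)
the tower `L₄(a^{1/q})/L₄` as in `NormTower4Solvable`. -/
def NormTower4Unsolvable (q : ℕ) (F : Type) [Field F] (a b x : F) : Prop :=
  ∀ (M1 : Type) [Field M1] [Algebra F M1] (α1 : M1),
    α1 ^ q = algebraMap F M1 (1 + (b * x ^ q + b ^ q)⁻¹) →
    IntermediateField.adjoin F {α1} = ⊤ →
    ∀ (M3 : Type) [Field M3] [Algebra M1 M3] (α3 : M3),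
      α3 ^ q = algebraMap M1 M3 (algebraMap F M1 (1 + x⁻¹)) →
      IntermediateField.adjoin M1 {α3} = ⊤ →
      ∀ (M4 : Type) [Field M4] [Algebra M3 M4] (α4 : M4),
        α4 ^ q = algebraMap M3 M4 (algebraMap M1 M3 (algebraMap F M1 (1 + (a + a⁻¹) * x⁻¹))) →
        IntermediateField.adjoin M3 {α4} = ⊤ →
        ∀ (M5 : Type) [Field M5] [Algebra M4 M5] (α5 : M5),
          α5 ^ q = algebraMap M4 M5 (algebraMap M3 M4 (algebraMap M1 M3 (algebraMap F M1 a))) →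
          IntermediateField.adjoin M4 {α5} = ⊤ →
          ¬ ∃ y : M5, Algebra.norm M4 y =
            algebraMap M3 M4 (algebraMap M1 M3 (algebraMap F M1 (b * x ^ q + b ^ q)))

/-!
Fix `π` with `ord π = 1`. Every element of `K` is `∑_{i < p} π ^ i * t_i ^ p` for unique `t_i`, and
the derivation `θ = π d/dπ` multiplies the `i`-th summand by `i`, so its graph is diophantine. If
`c` is integral and its residue is not of the form `a ^ p - a`, then comparing orders shows that
`θ t / t = x * (c + u - u ^ p + θ w)` forces `0 ≤ ord x`.

For `π = s ^ Q - s` and `c = s` this equation is solvable in `t`, `u`, `w` whenever `x = π * A(s)`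
with `A ∈ 𝔽_p[X]` prime to `X ^ Q - X`. Take `t = f(s)`: one needs `f' / (A * f) = -X` at `s`, up
to the additive group of the elements `u ^ p - u + θ w`. This group contains `π * h(s)` for every
polynomial `h`, so only the class of `f' / f` modulo `ξ = (X ^ Q - X) * A` matters. For a monic
prime `P` not dividing `ξ`, Euler's formula expresses the top coefficient of `P' / P mod ξ` as a
multiple of the trace of `1 / ξ` from `𝔽_p[X] / P`. If it vanishes, the additive Hilbert 90 gives
`1 ≡ ξ * (r ^ p - r)` modulo `P`, and since `ξ * (r ^ p - r) * P' / (A * P)` lies in that group,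
the pole at `P` can be removed: the class of `P' / P` is attained. The classes attained form a
group, and the `L`-functions of the characters `f ↦ e(μ(f' / f mod ξ))` show that these primes
generate every logarithmic derivative with vanishing top coefficient, `-X * A` among them.

The identity `π ^ 2 * a ^ 3 = π * (π * a ^ 3 - 1) + π` now yields a diophantine set which contains
`𝔽_p[s]` and lies in the valuation ring, because `0 ≤ ord (π ^ 2 * x ^ 3)` implies `0 ≤ ord x`. The
roots of monic polynomials of a fixed degree with coefficients in it form a diophantine set `S`,
still inside the valuation ring, containing the integral closure of `𝔽_p[s]`. Finally, `x` is in
the valuation ring if and only if `h * x ∈ S` for some `h ∈ S` with `ord h = 0`; the last condition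
is ensured by `w * (1 - h ^ m) ^ N ∈ S`, where `ord w < 0`, `m` is the order of the multiplicative
group of the residue field, and `N` is large.
-/

open Polynomial

/-! ### L-series over finite fields -/

section MonicPolynomials

variable {F : Type*} [Field F] [Finite F]

theorem finite_setOf_monic_natDegree_eq (F : Type*) [Field F] [Finite F] (n : ℕ) :
    {f : F[X] | f.Monic ∧ f.natDegree = n}.Finite := by
  have : Finite (degreeLT F (n + 1)) := Finite.of_equiv _ (degreeLTEquiv F (n + 1)).symm.toEquiv
  refine (Set.toFinite (degreeLT F (n + 1) : Set F[X])).subset fun f hf => mem_degreeLT.2 ?_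
  exact hf.2 ▸ degree_le_natDegree.trans_lt (by exact_mod_cast Nat.lt_succ_self _)

/-- The monic polynomials of degree `n` over a finite field. -/
def monicsOfDegree (F : Type*) [Field F] [Finite F] (n : ℕ) : Finset F[X] :=
  (finite_setOf_monic_natDegree_eq F n).toFinset

theorem mem_monicsOfDegree {n : ℕ} {f : F[X]} :
    f ∈ monicsOfDegree F n ↔ f.Monic ∧ f.natDegree = n :=
  Set.Finite.mem_toFinset _

theorem add_mem_monicsOfDegree {n : ℕ} {f g : F[X]} (hf : f ∈ monicsOfDegree F n)
    (hg : g.degree < n) : f + g ∈ monicsOfDegree F n := by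
  rw [mem_monicsOfDegree] at hf ⊢
  have hgf : g.degree < f.degree := by rwa [degree_eq_natDegree hf.1.ne_zero, hf.2]
  exact ⟨hf.1.add_of_left hgf, by
    rw [natDegree_eq_of_degree_eq (degree_add_eq_left_of_degree_lt hgf), hf.2]⟩

theorem finite_setOf_monic_irreducible_natDegree_le (F : Type*) [Field F] [Finite F] (n : ℕ) :
    {P : F[X] | (P.Monic ∧ Irreducible P) ∧ P.natDegree ≤ n}.Finite :=
  ((Set.finite_Iic n).biUnion fun k _ => finite_setOf_monic_natDegree_eq F k).subset
    fun _ hP => Set.mem_biUnion (Set.mem_Iic.2 hP.2) ⟨hP.1.1, rfl⟩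

/-- The monic irreducible polynomials of degree at most `n` over a finite field. -/
def monicIrreducibles (F : Type*) [Field F] [Finite F] (n : ℕ) : Finset F[X] :=
  (finite_setOf_monic_irreducible_natDegree_le F n).toFinset

theorem mem_monicIrreducibles {n : ℕ} {P : F[X]} :
    P ∈ monicIrreducibles F n ↔ (P.Monic ∧ Irreducible P) ∧ P.natDegree ≤ n :=
  Set.Finite.mem_toFinset _

theorem exists_mem_monicIrreducibles_dvd {k n : ℕ} {f : F[X]} (hf : f ∈ monicsOfDegree F k)
    (hk : k ≠ 0) (hkn : k ≤ n) : ∃ P ∈ monicIrreducibles F n, P ∣ f := by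
  rw [mem_monicsOfDegree] at hf
  obtain ⟨P, hPm, hPi, hPf⟩ := exists_monic_irreducible_factor f
    fun h => hk (hf.2 ▸ natDegree_eq_zero_of_isUnit h)
  have hdeg := natDegree_le_of_dvd hPf hf.1.ne_zero
  exact ⟨P, mem_monicIrreducibles.2 ⟨⟨hPm, hPi⟩, by lia⟩, hPf⟩

-- Multiplication by `a`, with each product replaced by the polynomial congruent to it mod `m`
-- that has the same quotient by `m` as the original factor, permutes the monic polynomials of
-- degree `n`, so the sum is invariant under multiplication by `χ a ≠ 1`.
theorem sum_monicsOfDegree_eq_zero {R : Type*} [CommRing R] [IsDomain R] (χ : F[X] →* R)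
    {m a : F[X]} (hm : m ≠ 0) (ha : IsCoprime a m)
    (hχ : ∀ f g, m ∣ f - g → χ f = χ g) (hχa : χ a ≠ 1) {n : ℕ} (hn : m.natDegree ≤ n) :
    ∑ f ∈ monicsOfDegree F n, χ f = 0 := by
  let σ : F[X] → F[X] := fun f => f + ((a * f) % m - f % m)
  have dvd_sub_mod (f : F[X]) : m ∣ f - f % m :=
    ⟨f / m, sub_eq_iff_eq_add.2 (EuclideanDomain.div_add_mod f m).symm⟩
  have dvd_mul_sub_σ (f : F[X]) : m ∣ a * f - σ f := by
    have : a * f - σ f = (a * f - (a * f) % m) - (f - f % m) := by ring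
    exact this ▸ dvd_sub (dvd_sub_mod _) (dvd_sub_mod _)
  have σ_mem : ∀ f ∈ monicsOfDegree F n, σ f ∈ monicsOfDegree F n := fun f hf =>
    add_mem_monicsOfDegree hf <| (degree_sub_le _ _).trans_lt <|
      (max_lt (degree_mod_lt _ hm) (degree_mod_lt _ hm)).trans_le (degree_le_of_natDegree_le hn)
  have σ_injective : Function.Injective σ := by
    intro f g h
    have hafg : m ∣ a * f - a * g := by
      have : a * f - a * g = (a * f - σ f) - (a * g - σ g) := by rw [h]; ring
      exact this ▸ dvd_sub (dvd_mul_sub_σ f) (dvd_mul_sub_σ g)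
    have hfg : m ∣ f - g := ha.symm.dvd_of_dvd_mul_left (by rwa [mul_sub])
    simpa only [σ, mod_eq_of_dvd_sub hfg, mod_eq_of_dvd_sub hafg, add_left_inj] using h
  have sum_eq : χ a * ∑ f ∈ monicsOfDegree F n, χ f = ∑ f ∈ monicsOfDegree F n, χ f := by
    rw [Finset.mul_sum]
    refine Finset.sum_nbij σ σ_mem σ_injective.injOn
      (Finset.surjOn_of_injOn_of_card_le _ σ_mem σ_injective.injOn le_rfl) fun f _ => ?_
    rw [← map_mul, hχ _ _ (dvd_mul_sub_σ f)]
  exact (mul_left_eq_self₀.1 sum_eq).resolve_left hχa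

end MonicPolynomials

section LSeries

theorem dvd_mul_iff_of_monic_irreducible_ne {F : Type*} [Field F] {P Q : F[X]}
    (hP : P.Monic ∧ Irreducible P) (hQ : Q.Monic ∧ Irreducible Q) (hne : P ≠ Q)
    (g : F[X]) : Q ∣ P * g ↔ Q ∣ g := by
  refine ⟨fun h => (hQ.2.prime.dvd_or_dvd h).resolve_left fun hQP => hne ?_, fun h => h.mul_left P⟩
  exact (eq_of_monic_of_associated hQ.1 hP.1 (hQ.2.associated_of_dvd hP.2 hQP)).symm

variable {F : Type*} [Field F] [Finite F] {R : Type*} [CommRing R]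

open Classical in
/-- The `L`-series `∑ χ(f) X ^ deg f` over the monic polynomials `f` divisible by no element of
`S`. The case `S = ∅` is the usual `L`-series; larger `S` serve to prove the Euler product by
removing one prime at a time. -/
def sievedLSeries (χ : F[X] →* R) (S : Finset F[X]) : PowerSeries R :=
  PowerSeries.mk fun n => ∑ f ∈ monicsOfDegree F n with ∀ P ∈ S, ¬ P ∣ f, χ f

/-- The Euler factor `1 - χ(P) X ^ deg P`. -/
def eulerFactor (χ : F[X] →* R) (P : F[X]) : PowerSeries R :=
  1 - PowerSeries.C (χ P) * PowerSeries.X ^ P.natDegree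

open Classical in
theorem coeff_sievedLSeries_mul_C_mul_X_pow (χ : F[X] →* R) {S : Finset F[X]} {P : F[X]}
    (hP : P.Monic) (hPS : ∀ Q ∈ S, ∀ g, Q ∣ P * g ↔ Q ∣ g) (n : ℕ) :
    PowerSeries.coeff n (sievedLSeries χ S * (PowerSeries.C (χ P) * PowerSeries.X ^ P.natDegree)) =
      ∑ f ∈ monicsOfDegree F n with (∀ Q ∈ S, ¬ Q ∣ f) ∧ P ∣ f, χ f := by
  rw [mul_left_comm, PowerSeries.coeff_C_mul, PowerSeries.coeff_mul_X_pow']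
  split_ifs with hn
  · rw [sievedLSeries, PowerSeries.coeff_mk, Finset.mul_sum]
    refine Finset.sum_nbij (P * ·) (fun f hf => ?_)
      (fun f _ g _ h => mul_left_cancel₀ hP.ne_zero h) (fun f hf => ?_)
      (fun f _ => (map_mul χ P f).symm)
    · simp only [Finset.mem_filter, mem_monicsOfDegree] at hf ⊢
      obtain ⟨⟨hfm, hfn⟩, hfS⟩ := hf
      refine ⟨⟨hP.mul hfm, ?_⟩, fun Q hQ => (hPS Q hQ f).not.2 (hfS Q hQ), dvd_mul_right P f⟩
      rw [hP.natDegree_mul hfm, hfn, Nat.add_sub_cancel' hn]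
    · simp only [Finset.mem_coe, Finset.mem_filter, mem_monicsOfDegree] at hf
      obtain ⟨⟨hfm, hfn⟩, hfS, g, rfl⟩ := hf
      have hg : g.Monic := hP.of_mul_monic_left hfm
      rw [hP.natDegree_mul hg] at hfn
      refine ⟨g, ?_, rfl⟩
      simp only [Finset.mem_coe, Finset.mem_filter, mem_monicsOfDegree]
      exact ⟨⟨hg, by lia⟩, fun Q hQ => (hPS Q hQ g).not.1 (hfS Q hQ)⟩
  · rw [mul_zero]
    refine (Finset.sum_eq_zero fun f hf => absurd ?_ hn).symm
    simp only [Finset.mem_filter, mem_monicsOfDegree] at hf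
    obtain ⟨⟨hfm, rfl⟩, -, hPf⟩ := hf
    exact natDegree_le_of_dvd hPf hfm.ne_zero

open Classical in
theorem sievedLSeries_insert (χ : F[X] →* R) {S : Finset F[X]}
    (hS : ∀ P ∈ S, P.Monic ∧ Irreducible P) {P : F[X]} (hP : P.Monic ∧ Irreducible P)
    (hPS : P ∉ S) : sievedLSeries χ (insert P S) = sievedLSeries χ S * eulerFactor χ P := by
  ext n
  rw [eulerFactor, mul_sub, mul_one, map_sub, coeff_sievedLSeries_mul_C_mul_X_pow χ hP.1
    fun Q hQ => dvd_mul_iff_of_monic_irreducible_ne hP (hS Q hQ)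
      (ne_of_mem_of_not_mem hQ hPS).symm]
  simp only [sievedLSeries, PowerSeries.coeff_mk, Finset.forall_mem_insert]
  rw [eq_sub_iff_add_eq', ← Finset.filter_filter, ← Finset.filter_filter,
    Finset.filter_comm (¬ P ∣ ·)]
  exact Finset.sum_filter_add_sum_filter_not _ _ _

theorem sievedLSeries_eq_mul_prod (χ : F[X] →* R) {S : Finset F[X]}
    (hS : ∀ P ∈ S, P.Monic ∧ Irreducible P) :
    sievedLSeries χ S = sievedLSeries χ ∅ * ∏ P ∈ S, eulerFactor χ P := by
  classical
  induction S using Finset.induction_on with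
  | empty => rw [Finset.prod_empty, mul_one]
  | insert P S hPS ih =>
    rw [Finset.forall_mem_insert] at hS
    rw [sievedLSeries_insert χ hS.2 hS.1 hPS, ih hS.2, Finset.prod_insert hPS, mul_assoc,
      mul_comm (eulerFactor χ P)]

theorem X_pow_dvd_sievedLSeries_monicIrreducibles_sub_one (χ : F[X] →* R) (n : ℕ) :
    PowerSeries.X ^ (n + 1) ∣ sievedLSeries χ (monicIrreducibles F n) - 1 := by
  classical
  rw [PowerSeries.X_pow_dvd_iff]
  intro k hk
  rw [map_sub, sievedLSeries, PowerSeries.coeff_mk, PowerSeries.coeff_one, sub_eq_zero]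
  split_ifs with h0
  · have : {f ∈ monicsOfDegree F k | ∀ P ∈ monicIrreducibles F n, ¬ P ∣ f} = {1} := by
      ext f
      simp only [Finset.mem_filter, mem_monicsOfDegree, Finset.mem_singleton, h0]
      refine ⟨fun hf => hf.1.1.natDegree_eq_zero.1 hf.1.2, ?_⟩
      rintro rfl
      exact ⟨⟨monic_one, natDegree_one⟩, fun P hP h =>
        (mem_monicIrreducibles.1 hP).1.2.not_isUnit (isUnit_of_dvd_one h)⟩
    rw [this, Finset.sum_singleton, map_one]
  · refine Finset.sum_eq_zero fun f hf => ?_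
    rw [Finset.mem_filter] at hf
    obtain ⟨P, hP, hPf⟩ := exists_mem_monicIrreducibles_dvd hf.1 h0 (Nat.lt_succ_iff.1 hk)
    exact absurd hPf (hf.2 P hP)

theorem X_pow_dvd_lSeries_mul_prod_sub_one (χ : F[X] →* R) (n : ℕ) :
    PowerSeries.X ^ (n + 1) ∣
      sievedLSeries χ ∅ * ∏ P ∈ monicIrreducibles F n, eulerFactor χ P - 1 := by
  rw [← sievedLSeries_eq_mul_prod χ fun P hP => (mem_monicIrreducibles.1 hP).1]
  exact X_pow_dvd_sievedLSeries_monicIrreducibles_sub_one χ n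

theorem lSeries_eq_coe_trunc [IsDomain R] (χ : F[X] →* R) {m a : F[X]} (hm : m ≠ 0)
    (ha : IsCoprime a m) (hχ : ∀ f g, m ∣ f - g → χ f = χ g) (hχa : χ a ≠ 1) :
    sievedLSeries χ ∅ = (PowerSeries.trunc m.natDegree (sievedLSeries χ ∅) : R[X]) := by
  ext n
  rw [coeff_coe, PowerSeries.coeff_trunc]
  split_ifs with hn
  · rfl
  · rw [sievedLSeries, PowerSeries.coeff_mk]
    simp only [Finset.notMem_empty, false_imp_iff, implies_true, Finset.filter_true]
    exact sum_monicsOfDegree_eq_zero χ hm ha hχ hχa (not_lt.1 hn)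

end LSeries

theorem dvd_prod_sub_one {ι A : Type*} [CommRing A] (d : A) (s : Finset ι) (f : ι → A)
    (hf : ∀ i ∈ s, d ∣ f i - 1) : d ∣ ∏ i ∈ s, f i - 1 :=
  Finset.prod_induction f (fun a => d ∣ a - 1)
    (fun a b ha hb => by
      have : a * b - 1 = (a - 1) * b + (b - 1) := by ring
      exact this ▸ dvd_add (ha.mul_right b) hb)
    (by simp) hf

section NatSeries

variable {R : Type*} [CommRing R]

theorem coeff_le_coeff_mul_of_constantCoeff_eq_one (f : PowerSeries ℕ) {g : PowerSeries ℕ}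
    (hg : PowerSeries.constantCoeff g = 1) (n : ℕ) :
    PowerSeries.coeff n f ≤ PowerSeries.coeff n (f * g) := by
  rw [PowerSeries.coeff_mul]
  refine le_of_eq_of_le ?_ (Finset.single_le_sum
    (f := fun q : ℕ × ℕ => PowerSeries.coeff q.1 f * PowerSeries.coeff q.2 g)
    (fun _ _ => Nat.zero_le _) (a := (n, 0)) (by simp))
  rw [PowerSeries.coeff_zero_eq_constantCoeff_apply, hg, mul_one]

theorem map_mk_dvd_mul_one_sub_X_pow {m : ℕ} (hm : m ≠ 0) :
    PowerSeries.map (Nat.castRingHom R) (PowerSeries.mk fun n => if m ∣ n then 1 else 0) *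
      (1 - PowerSeries.X ^ m) = 1 := by
  ext n
  rw [mul_sub, mul_one, map_sub, PowerSeries.coeff_mul_X_pow', PowerSeries.coeff_map,
    PowerSeries.coeff_map, PowerSeries.coeff_mk, PowerSeries.coeff_mk, PowerSeries.coeff_one]
  by_cases hmn : m ≤ n
  · have hn : n ≠ 0 := by lia
    simp only [if_pos hmn, if_neg hn, Nat.dvd_sub_iff_left hmn dvd_rfl, sub_self]
  · rw [if_neg hmn, sub_zero]
    rcases eq_or_ne n 0 with rfl | hn
    · simp
    · have hndvd : ¬ m ∣ n := fun h => hmn (Nat.le_of_dvd (Nat.pos_of_ne_zero hn) h)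
      simp [hn, hndvd]

theorem exists_nat_powerSeries_mul_eq_one {A : PowerSeries R}
    (hA : ∃ m k : ℕ, m ≠ 0 ∧ A = (1 - PowerSeries.X ^ m) ^ k) :
    ∃ g : PowerSeries ℕ, PowerSeries.map (Nat.castRingHom R) g * A = 1 ∧
      PowerSeries.constantCoeff g = 1 ∧
      (A ≠ 1 → ∃ m ≠ 0, ∀ i, 1 ≤ PowerSeries.coeff (m * i) g) := by
  obtain ⟨m, k, hm, rfl⟩ := hA
  let e : PowerSeries ℕ := PowerSeries.mk fun n => if m ∣ n then 1 else 0
  have he : PowerSeries.constantCoeff e = 1 := by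
    simp [e, ← PowerSeries.coeff_zero_eq_constantCoeff_apply]
  have he_pow (j : ℕ) : PowerSeries.constantCoeff (e ^ j) = 1 := by rw [map_pow, he, one_pow]
  refine ⟨e ^ k, ?_, he_pow k, fun hk => ⟨m, hm, fun i => ?_⟩⟩
  · rw [map_pow, ← mul_pow, map_mk_dvd_mul_one_sub_X_pow hm, one_pow]
  · obtain ⟨j, rfl⟩ := Nat.exists_eq_succ_of_ne_zero (n := k) (by rintro rfl; exact hk (pow_zero _))
    calc 1 = PowerSeries.coeff (m * i) e := by simp [e]
      _ ≤ PowerSeries.coeff (m * i) (e ^ (j + 1)) := by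
        rw [pow_succ']
        exact coeff_le_coeff_mul_of_constantCoeff_eq_one e (he_pow j) _

theorem coeff_eq_zero_of_X_pow_dvd_coe_mul_sub_one {n : ℕ} [CharZero R] {A : PowerSeries R}
    {G : R[X]} {g : PowerSeries ℕ} (hg : PowerSeries.map (Nat.castRingHom R) g * A = 1)
    (hG : PowerSeries.X ^ (n + 1) ∣ (G : PowerSeries R) * A - 1) (hn : G.natDegree < n) :
    PowerSeries.coeff n g = 0 := by
  obtain ⟨B, hB⟩ := hG
  have hGg : (G : PowerSeries R) = PowerSeries.map (Nat.castRingHom R) g +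
      PowerSeries.X ^ (n + 1) * (B * PowerSeries.map (Nat.castRingHom R) g) := by
    linear_combination PowerSeries.map (Nat.castRingHom R) g * hB - (G : PowerSeries R) * hg
  have hcoeff := congrArg (PowerSeries.coeff n) hGg
  rw [coeff_coe, coeff_eq_zero_of_natDegree_lt hn, map_add, PowerSeries.coeff_X_pow_mul',
    if_neg (by lia), add_zero, PowerSeries.coeff_map] at hcoeff
  rw [← Nat.cast_inj (R := R), Nat.cast_zero]
  exact hcoeff.symm

end NatSeries

section LSeries

variable {F : Type*} [Field F] [Finite F] {R : Type*} [CommRing R]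

theorem X_pow_dvd_prod_lSeries_mul_prod_sub_one {ι : Type*} [Fintype ι] (χ : ι → F[X] →* R)
    (n : ℕ) : PowerSeries.X ^ (n + 1) ∣ (∏ j, sievedLSeries (χ j) ∅) *
      (∏ P ∈ monicIrreducibles F n, ∏ j, eulerFactor (χ j) P) - 1 := by
  rw [Finset.prod_comm, ← Finset.prod_mul_distrib]
  exact dvd_prod_sub_one _ _ _ fun j _ => X_pow_dvd_lSeries_mul_prod_sub_one (χ j) n

-- The product of the `L`-series has nonnegative integer coefficients, and the factor at `P₀` alone
-- makes infinitely many of them positive.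
theorem exists_lSeries_ne_coe [CharZero R] {ι : Type*} [Fintype ι] (χ : ι → F[X] →* R)
    (hχ : ∀ P : F[X], P.Monic ∧ Irreducible P →
      ∃ m k : ℕ, m ≠ 0 ∧ ∏ j, eulerFactor (χ j) P = (1 - PowerSeries.X ^ m) ^ k)
    {P₀ : F[X]} (hP₀ : P₀.Monic ∧ Irreducible P₀) (hχP₀ : ∏ j, eulerFactor (χ j) P₀ ≠ 1) :
    ∃ j, ∀ G : R[X], sievedLSeries (χ j) ∅ ≠ G := by
  classical
  by_contra! hcon
  choose G hG using hcon
  choose! g hg hg0 hg1 using fun P hP => exists_nat_powerSeries_mul_eq_one (hχ P hP)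
  obtain ⟨m, hm, hcoeff⟩ := hg1 P₀ hP₀ hχP₀
  let D := P₀.natDegree + (∏ j, G j).natDegree + 1
  have hD : D ≤ m * D := Nat.le_mul_of_pos_left _ (Nat.pos_of_ne_zero hm)
  have mem_spec {P : F[X]} (hP : P ∈ monicIrreducibles F (m * D)) := (mem_monicIrreducibles.1 hP).1
  have hzero : PowerSeries.coeff (m * D) (∏ P ∈ monicIrreducibles F (m * D), g P) = 0 := by
    refine coeff_eq_zero_of_X_pow_dvd_coe_mul_sub_one (G := ∏ j, G j)
      (A := ∏ P ∈ monicIrreducibles F (m * D), ∏ j, eulerFactor (χ j) P) ?_ ?_ (by lia)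
    · rw [map_prod, ← Finset.prod_mul_distrib]
      exact Finset.prod_eq_one fun P hP => hg P (mem_spec hP)
    · have := X_pow_dvd_prod_lSeries_mul_prod_sub_one χ (m * D)
      simpa only [hG, ← coeToPowerSeries.ringHom_apply, ← map_prod] using this
  have hpos := calc
    1 ≤ PowerSeries.coeff (m * D) (g P₀) := hcoeff D
    _ ≤ PowerSeries.coeff (m * D) (g P₀ * ∏ P ∈ (monicIrreducibles F (m * D)).erase P₀, g P) := by
      refine coeff_le_coeff_mul_of_constantCoeff_eq_one _ ?_ _
      rw [map_prod]
      exact Finset.prod_eq_one fun P hP => hg0 P (mem_spec (Finset.mem_of_mem_erase hP))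
  rw [Finset.mul_prod_erase _ _ (mem_monicIrreducibles.2 ⟨hP₀, by lia⟩), hzero] at hpos
  exact absurd hpos (by norm_num)

end LSeries

/-! ### Logarithmic derivatives modulo a polynomial -/

section LogDeriv

variable {R : Type*} [CommRing R] {x f g : R[X]}

theorem isUnit_adjoinRoot_mk_iff : IsUnit (AdjoinRoot.mk x f) ↔ IsCoprime f x := by
  simp only [isUnit_iff_exists_inv', AdjoinRoot.mk_surjective.exists, ← map_mul,
    ← map_one (AdjoinRoot.mk x), AdjoinRoot.mk_eq_mk]
  constructor
  · rintro ⟨g, k, hk⟩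
    exact ⟨g, -k, by linear_combination hk⟩
  · rintro ⟨g, k, hk⟩
    exact ⟨g, -k, by linear_combination hk⟩

/-- The logarithmic derivative `f' / f` modulo `x`; it is `0` when `f` is not a unit modulo `x`. -/
def logDerivMod (x f : R[X]) : AdjoinRoot x :=
  AdjoinRoot.mk x (derivative f) * Ring.inverse (AdjoinRoot.mk x f)

theorem mk_mul_logDerivMod (hf : IsCoprime f x) :
    AdjoinRoot.mk x f * logDerivMod x f = AdjoinRoot.mk x (derivative f) := by
  rw [logDerivMod, mul_left_comm, Ring.mul_inverse_cancel _ (isUnit_adjoinRoot_mk_iff.2 hf),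
    mul_one]

theorem logDerivMod_eq_iff (hf : IsCoprime f x) {w : AdjoinRoot x} :
    logDerivMod x f = w ↔ AdjoinRoot.mk x f * w = AdjoinRoot.mk x (derivative f) := by
  rw [← mk_mul_logDerivMod hf, (isUnit_adjoinRoot_mk_iff.2 hf).mul_right_inj, eq_comm]

theorem logDerivMod_one : logDerivMod x 1 = 0 := by
  rw [logDerivMod, derivative_one, map_zero, zero_mul]

theorem logDerivMod_mul (hf : IsCoprime f x) (hg : IsCoprime g x) :
    logDerivMod x (f * g) = logDerivMod x f + logDerivMod x g := by
  rw [logDerivMod_eq_iff (hf.mul_left hg), derivative_mul, map_add, map_mul, map_mul, map_mul,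
    ← mk_mul_logDerivMod hf, ← mk_mul_logDerivMod hg]
  ring

theorem mk_eq_mk_of_sq_dvd_sub (h : x ^ 2 ∣ f - g) : AdjoinRoot.mk x f = AdjoinRoot.mk x g :=
  AdjoinRoot.mk_eq_mk.2 ((dvd_pow_self x two_ne_zero).trans h)

theorem logDerivMod_congr (h : x ^ 2 ∣ f - g) : logDerivMod x f = logDerivMod x g := by
  have hderiv : AdjoinRoot.mk x (derivative f) = AdjoinRoot.mk x (derivative g) := by
    obtain ⟨k, hk⟩ := h
    refine AdjoinRoot.mk_eq_mk.2 ⟨2 * derivative x * k + x * derivative k, ?_⟩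
    rw [← derivative_sub, hk, sq, derivative_mul, derivative_mul]
    ring
  rw [logDerivMod, logDerivMod, hderiv, mk_eq_mk_of_sq_dvd_sub h]

end LogDeriv

section LogDerivCharacter

variable {p : ℕ} [Fact p.Prime] (x : (ZMod p)[X])

open Classical in
/-- The Dirichlet character `f ↦ e(μ(f'/f mod x))` of `𝔽_p[X]`, where `e` is the standard additive
character of `𝔽_p`. Its modulus is `x ^ 2`. -/
def logDerivChar (μ : AdjoinRoot x →ₗ[ZMod p] ZMod p) : (ZMod p)[X] →* ℂ where
  toFun f := if IsCoprime f x then ZMod.stdAddChar (μ (logDerivMod x f)) else 0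
  map_one' := by
    rw [if_pos isCoprime_one_left, logDerivMod_one, map_zero, AddChar.map_zero_eq_one]
  map_mul' f g := by
    by_cases hf : IsCoprime f x
    · by_cases hg : IsCoprime g x
      · rw [if_pos hf, if_pos hg, if_pos (hf.mul_left hg), logDerivMod_mul hf hg, map_add,
          AddChar.map_add_eq_mul]
      · rw [if_neg hg, if_neg (fun h => hg h.of_mul_left_right), mul_zero]
    · rw [if_neg hf, if_neg (fun h => hf h.of_mul_left_left), zero_mul]

variable {x} (μ : AdjoinRoot x →ₗ[ZMod p] ZMod p)

theorem logDerivChar_of_isCoprime {f : (ZMod p)[X]} (hf : IsCoprime f x) :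
    logDerivChar x μ f = ZMod.stdAddChar (μ (logDerivMod x f)) :=
  if_pos hf

theorem logDerivChar_of_not_isCoprime {f : (ZMod p)[X]} (hf : ¬ IsCoprime f x) :
    logDerivChar x μ f = 0 :=
  if_neg hf

theorem logDerivChar_congr {f g : (ZMod p)[X]} (h : x ^ 2 ∣ f - g) :
    logDerivChar x μ f = logDerivChar x μ g := by
  have hiff : IsCoprime f x ↔ IsCoprime g x := by
    rw [← isUnit_adjoinRoot_mk_iff, ← isUnit_adjoinRoot_mk_iff, mk_eq_mk_of_sq_dvd_sub h]
  by_cases hf : IsCoprime f x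
  · rw [logDerivChar_of_isCoprime μ hf, logDerivChar_of_isCoprime μ (hiff.1 hf),
      logDerivMod_congr h]
  · rw [logDerivChar_of_not_isCoprime μ hf, logDerivChar_of_not_isCoprime μ (hiff.not.1 hf)]

theorem logDerivChar_ne_one {f : (ZMod p)[X]} (hf : IsCoprime f x)
    (hμ : μ (logDerivMod x f) ≠ 0) : logDerivChar x μ f ≠ 1 := by
  rw [logDerivChar_of_isCoprime μ hf, ← AddChar.map_zero_eq_one (ZMod.stdAddChar (N := p))]
  exact ZMod.injective_stdAddChar.ne hμ

theorem prod_one_sub_stdAddChar_mul (Y : PowerSeries ℂ) :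
    ∏ k : ZMod p, (1 - PowerSeries.C (ZMod.stdAddChar k : ℂ) * Y) = 1 - Y ^ p := by
  classical
  have hp : 0 < p := (Fact.out : p.Prime).pos
  have hζ : IsPrimitiveRoot (PowerSeries.C (Complex.exp (2 * Real.pi * Complex.I / p))) p :=
    (Complex.isPrimitiveRoot_exp p hp.ne').map_of_injective PowerSeries.C_injective
  have hinj : Function.Injective fun k : ZMod p => PowerSeries.C (ZMod.stdAddChar k : ℂ) :=
    PowerSeries.C_injective.comp ZMod.injective_stdAddChar
  have hroots : (Finset.univ : Finset (ZMod p)).image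
      (fun k => PowerSeries.C (ZMod.stdAddChar k : ℂ)) = nthRootsFinset p 1 := by
    refine Finset.eq_of_subset_of_card_le (Finset.image_subset_iff.2 fun k _ => ?_) ?_
    · rw [mem_nthRootsFinset hp, ← map_pow, ← AddChar.map_nsmul_eq_pow, nsmul_eq_mul,
        CharP.cast_eq_zero, zero_mul, AddChar.map_zero_eq_one, map_one]
    · rw [hζ.card_nthRootsFinset, Finset.card_image_of_injective _ hinj, Finset.card_univ,
        ZMod.card]
  rw [← one_pow p, hζ.pow_sub_pow_eq_prod_sub_mul 1 Y hp, ← hroots,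
    Finset.prod_image fun _ _ _ _ h => hinj h]
  simp only [one_pow]

variable (ψ lam : AdjoinRoot x →ₗ[ZMod p] ZMod p) {P : (ZMod p)[X]}

theorem eulerFactor_logDerivChar_of_isCoprime (hPx : IsCoprime P x) :
    eulerFactor (logDerivChar x μ) P =
      1 - PowerSeries.C (ZMod.stdAddChar (μ (logDerivMod x P)) : ℂ) *
        PowerSeries.X ^ P.natDegree := by
  rw [eulerFactor, logDerivChar_of_isCoprime μ hPx]

theorem prod_eulerFactor_of_not_isCoprime (hPx : ¬ IsCoprime P x) :
    ∏ j : ZMod p, eulerFactor (logDerivChar x (ψ + j • lam)) P = 1 :=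
  Finset.prod_eq_one fun j _ => by
    rw [eulerFactor, logDerivChar_of_not_isCoprime _ hPx, map_zero, zero_mul, sub_zero]

theorem prod_eulerFactor_of_apply_ne_zero (hPx : IsCoprime P x) (hP : lam (logDerivMod x P) ≠ 0) :
    ∏ j : ZMod p, eulerFactor (logDerivChar x (ψ + j • lam)) P =
      1 - PowerSeries.X ^ (P.natDegree * p) := by
  rw [pow_mul, ← prod_one_sub_stdAddChar_mul]
  have hbij : Function.Bijective fun j : ZMod p =>
      (ψ + j • lam) (logDerivMod x P) :=
    Finite.injective_iff_bijective.1 fun i j hij => mul_right_cancel₀ hP (add_left_cancel hij)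
  exact Fintype.prod_bijective _ hbij _ _ fun j => eulerFactor_logDerivChar_of_isCoprime _ hPx

theorem prod_eulerFactor_of_apply_eq_zero (hPx : IsCoprime P x) (hP : lam (logDerivMod x P) = 0)
    (hψP : ψ (logDerivMod x P) = 0) :
    ∏ j : ZMod p, eulerFactor (logDerivChar x (ψ + j • lam)) P =
      (1 - PowerSeries.X ^ P.natDegree) ^ p := by
  have hfactor (j : ZMod p) : eulerFactor (logDerivChar x (ψ + j • lam)) P =
      1 - PowerSeries.X ^ P.natDegree := by
    rw [eulerFactor_logDerivChar_of_isCoprime _ hPx, LinearMap.add_apply, LinearMap.smul_apply,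
      hP, hψP, smul_zero, add_zero, AddChar.map_zero_eq_one, map_one, one_mul]
  simp only [hfactor, Finset.prod_const, Finset.card_univ, ZMod.card]

theorem prod_eulerFactor_eq_pow
    (hψ : IsCoprime P x → lam (logDerivMod x P) = 0 → ψ (logDerivMod x P) = 0)
    (hP : P.natDegree ≠ 0) :
    ∃ m k : ℕ, m ≠ 0 ∧ ∏ j : ZMod p, eulerFactor (logDerivChar x (ψ + j • lam)) P =
      (1 - PowerSeries.X ^ m) ^ k := by
  have hp : p ≠ 0 := (Fact.out : p.Prime).ne_zero
  by_cases hPx : IsCoprime P x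
  · by_cases hl : lam (logDerivMod x P) = 0
    · exact ⟨_, _, hP, prod_eulerFactor_of_apply_eq_zero ψ lam hPx hl (hψ hPx hl)⟩
    · exact ⟨_, 1, mul_ne_zero hP hp, by
        rw [pow_one, prod_eulerFactor_of_apply_ne_zero ψ lam hPx hl]⟩
  · exact ⟨1, 0, one_ne_zero, by rw [pow_zero, prod_eulerFactor_of_not_isCoprime ψ lam hPx]⟩

theorem one_sub_X_pow_pow_ne_one {R : Type*} [CommRing R] [IsDomain R] {m k : ℕ} (hm : m ≠ 0)
    (hk : k ≠ 0) : (1 - PowerSeries.X ^ m : PowerSeries R) ^ k ≠ 1 := by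
  intro h
  have hpoly : (1 - X ^ m : R[X]) ^ k = 1 := coe_injective R (by push_cast; exact h)
  have hdeg : ((1 - X ^ m : R[X]) ^ k).natDegree = k * m := by
    rw [natDegree_pow, ← natDegree_neg, neg_sub, ← map_one C, natDegree_X_pow_sub_C]
  rw [hpoly, natDegree_one] at hdeg
  exact mul_ne_zero hk hm hdeg.symm

theorem prod_eulerFactor_ne_one
    (hψ : lam (logDerivMod x P) = 0 → ψ (logDerivMod x P) = 0) (hPx : IsCoprime P x)
    (hP : P.natDegree ≠ 0) :
    ∏ j : ZMod p, eulerFactor (logDerivChar x (ψ + j • lam)) P ≠ 1 := by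
  have hp : p ≠ 0 := (Fact.out : p.Prime).ne_zero
  by_cases hl : lam (logDerivMod x P) = 0
  · rw [prod_eulerFactor_of_apply_eq_zero ψ lam hPx hl (hψ hl)]
    exact one_sub_X_pow_pow_ne_one hP hp
  · rw [prod_eulerFactor_of_apply_ne_zero ψ lam hPx hl, ← pow_one (1 - _)]
    exact one_sub_X_pow_pow_ne_one (mul_ne_zero hP hp) one_ne_zero

theorem exists_monic_irreducible_isCoprime {F : Type*} [Field F] {x : F[X]}
    (hx : 0 < x.natDegree) : ∃ P : F[X], (P.Monic ∧ Irreducible P) ∧ IsCoprime P x := by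
  obtain ⟨P, hPm, hPi, k, hk⟩ := exists_monic_irreducible_factor (x + C 1) fun h => hx.ne' <| by
    rw [← natDegree_add_C (a := 1), natDegree_eq_zero_of_isUnit h]
  exact ⟨P, ⟨hPm, hPi⟩, k, -1, by rw [map_one] at hk; linear_combination -hk⟩

-- A functional `ψ` killing the span but not the given class would make the `L`-series of all the
-- characters attached to `ψ + j • lam` polynomials.
theorem logDerivMod_mem_span (hx : 0 < x.natDegree) {a : (ZMod p)[X]} (ha : IsCoprime a x)
    (hla : lam (logDerivMod x a) = 0) :
    logDerivMod x a ∈ Submodule.span (ZMod p) (logDerivMod x ''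
      {P | (P.Monic ∧ Irreducible P) ∧ IsCoprime P x ∧ lam (logDerivMod x P) = 0}) := by
  by_contra hcon
  obtain ⟨ψ, hψa, hψ⟩ := Submodule.exists_le_ker_of_notMem hcon
  have hψP (P : (ZMod p)[X]) (hP : P.Monic ∧ Irreducible P) (hPx : IsCoprime P x)
      (hlP : lam (logDerivMod x P) = 0) : ψ (logDerivMod x P) = 0 :=
    hψ (Submodule.subset_span ⟨P, ⟨hP, hPx, hlP⟩, rfl⟩)
  obtain ⟨P₀, hP₀, hP₀x⟩ := exists_monic_irreducible_isCoprime hx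
  obtain ⟨j, hj⟩ := exists_lSeries_ne_coe (fun j : ZMod p => logDerivChar x (ψ + j • lam))
    (fun P hP => prod_eulerFactor_eq_pow ψ lam (hψP P hP) hP.2.natDegree_pos.ne') hP₀
    (prod_eulerFactor_ne_one ψ lam (hψP P₀ hP₀ hP₀x) hP₀x hP₀.2.natDegree_pos.ne')
  have hx2 : x ^ 2 ≠ 0 := pow_ne_zero 2 (ne_zero_of_natDegree_gt hx)
  refine hj _ (lSeries_eq_coe_trunc _ hx2 ha.pow_right (fun f g => logDerivChar_congr _)
    (logDerivChar_ne_one _ ha ?_))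
  rwa [LinearMap.add_apply, LinearMap.smul_apply, hla, smul_zero, add_zero]

end LogDerivCharacter

/-! ### Additive Hilbert 90 and traces -/

section AdditiveHilbert90

variable (F : Type*) {L : Type*} [Field F] [Fintype F] [Field L] [Finite L] [Algebra F L]

theorem mem_range_algebraMap_of_pow_card_eq_self {r : L} (hr : r ^ Fintype.card F = r) :
    r ∈ Set.range (algebraMap F L) := by
  rw [IsGalois.mem_range_algebraMap_iff_fixed]
  intro g
  obtain ⟨i, rfl⟩ := (FiniteField.bijective_frobeniusAlgEquivOfAlgebraic_pow F L).2 g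
  rw [AlgEquiv.coe_pow]
  exact Function.IsFixedPt.iterate hr i.1

/-- The `F`-linear map `r ↦ r ^ q - r` on a finite extension of a field `F` of cardinality `q`. -/
def frobeniusSubId : L →ₗ[F] L :=
  (FiniteField.frobeniusAlgEquivOfAlgebraic F L).toLinearMap - LinearMap.id

variable {F}

theorem frobeniusSubId_apply (r : L) : frobeniusSubId F r = r ^ Fintype.card F - r := rfl

theorem trace_frobeniusSubId (r : L) : Algebra.trace F L (frobeniusSubId F r) = 0 := by
  rw [frobeniusSubId, LinearMap.sub_apply, map_sub, sub_eq_zero]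
  exact Algebra.trace_eq_of_algEquiv (FiniteField.frobeniusAlgEquivOfAlgebraic F L) r

variable (F L)

theorem finrank_ker_frobeniusSubId_le_one :
    Module.finrank F (LinearMap.ker (frobeniusSubId F : L →ₗ[F] L)) ≤ 1 := by
  refine finrank_le_one ⟨1, ?_⟩ ?_
  · rw [LinearMap.mem_ker, frobeniusSubId_apply, one_pow, sub_self]
  · rintro ⟨r, hr⟩
    rw [LinearMap.mem_ker, frobeniusSubId_apply, sub_eq_zero] at hr
    obtain ⟨c, rfl⟩ := mem_range_algebraMap_of_pow_card_eq_self F hr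
    exact ⟨c, Subtype.ext (Algebra.algebraMap_eq_smul_one c).symm⟩

theorem range_frobeniusSubId :
    LinearMap.range (frobeniusSubId F : L →ₗ[F] L) = LinearMap.ker (Algebra.trace F L) := by
  have hle : LinearMap.range (frobeniusSubId F : L →ₗ[F] L) ≤ LinearMap.ker (Algebra.trace F L) :=
    LinearMap.range_le_ker_iff.2 (LinearMap.ext trace_frobeniusSubId)
  refine Submodule.eq_of_le_of_finrank_le hle ?_
  have hfrob := LinearMap.finrank_range_add_finrank_ker (frobeniusSubId F : L →ₗ[F] L)
  have htr := LinearMap.finrank_range_add_finrank_ker (Algebra.trace F L)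
  rw [LinearMap.range_eq_top.2 (Algebra.trace_surjective F L), finrank_top,
    Module.finrank_self] at htr
  have hker := finrank_ker_frobeniusSubId_le_one F L
  omega

variable {F L}

theorem exists_eq_pow_card_sub_of_trace_eq_zero {u : L} (hu : Algebra.trace F L u = 0) :
    ∃ r : L, u = r ^ Fintype.card F - r := by
  have hmem : u ∈ LinearMap.range (frobeniusSubId F) := by rwa [range_frobeniusSubId]
  exact hmem.imp fun r hr => hr.symm

end AdditiveHilbert90

section TopCoord

variable {F : Type*} [Field F] {x P : F[X]}

/-- The coefficient of `X ^ (deg x - 1)` in the remainder modulo `x`, as a linear functional. -/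
def topCoord (hx : 0 < x.natDegree) : AdjoinRoot x →ₗ[F] F :=
  (AdjoinRoot.powerBasis (ne_zero_of_natDegree_gt hx)).basis.coord
    ⟨x.natDegree - 1, by rw [AdjoinRoot.powerBasis_dim]; exact Nat.sub_one_lt hx.ne'⟩

theorem topCoord_mk (hx : 0 < x.natDegree) {f : F[X]} (hf : f.natDegree < x.natDegree) :
    topCoord hx (AdjoinRoot.mk x f) = f.coeff (x.natDegree - 1) := by
  set pb := AdjoinRoot.powerBasis (ne_zero_of_natDegree_gt hx)
  have hsum : AdjoinRoot.mk x f = ∑ i : Fin pb.dim, f.coeff i • pb.basis i := by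
    simp only [PowerBasis.coe_basis]
    rw [Fin.sum_univ_eq_sum_range (fun i => f.coeff i • pb.gen ^ i), AdjoinRoot.powerBasis_dim,
      AdjoinRoot.powerBasis_gen, ← AdjoinRoot.aeval_eq, aeval_eq_sum_range' hf]
  rw [topCoord, hsum, Module.Basis.coord_apply, Module.Basis.repr_sum_self]

theorem mk_derivative_ne_zero [PerfectField F] (hP : Irreducible P) :
    AdjoinRoot.mk P (derivative P) ≠ 0 := by
  have := Fact.mk hP
  rw [← AdjoinRoot.aeval_eq]
  exact (PerfectField.separable_of_irreducible hP).aeval_derivative_ne_zero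
    ((AdjoinRoot.aeval_eq P).trans AdjoinRoot.mk_self)

theorem trace_div_mk_derivative [PerfectField F] (hPm : P.Monic) [hP : Fact (Irreducible P)]
    (v : AdjoinRoot P) :
    Algebra.trace F (AdjoinRoot P) (v / AdjoinRoot.mk P (derivative P)) =
      topCoord hP.out.natDegree_pos v := by
  have := hPm.finite_adjoinRoot
  set pb := AdjoinRoot.powerBasis hPm.ne_zero
  have hmin : minpoly F pb.gen = P := AdjoinRoot.minpoly_powerBasis_gen_of_monic hPm
  have hlead : (minpolyDiv F pb.gen).coeff (P.natDegree - 1) = 1 := by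
    have hsucc := natDegree_minpolyDiv_succ pb.isIntegral_gen
    rw [hmin] at hsucc
    rw [← hsucc, Nat.add_sub_cancel]
    exact minpolyDiv_monic pb.isIntegral_gen
  set i : Fin pb.dim := ⟨P.natDegree - 1, by
    rw [AdjoinRoot.powerBasis_dim]; exact Nat.sub_one_lt hP.out.natDegree_pos.ne'⟩
  have hdual : pb.basis.traceDual i = 1 / AdjoinRoot.mk P (derivative P) := by
    rw [Module.Basis.traceDual_powerBasis_eq, hlead, hmin, AdjoinRoot.powerBasis_gen,
      AdjoinRoot.aeval_eq]
  rw [← mul_one_div, ← hdual, topCoord, Module.Basis.coord_apply,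
    ← pb.basis.traceDual_traceDual, Module.Basis.traceDual_repr_apply,
    pb.basis.traceDual_traceDual, Algebra.traceForm_apply]

theorem exists_eq_mul_add_mul_of_isCoprime {f : F[X]} (hPm : P.Monic) (hPx : IsCoprime P x)
    (hP : 0 < P.natDegree) (hx : 0 < x.natDegree) (hf : f.natDegree < P.natDegree + x.natDegree) :
    ∃ a b : F[X], f = a * x + b * P ∧ a.natDegree < P.natDegree ∧ b.natDegree < x.natDegree := by
  obtain ⟨w, u, hwu⟩ := hPx
  set a := f * u %ₘ P
  have ha : a.natDegree < P.natDegree := natDegree_modByMonic_lt _ hPm fun h => by simp [h] at hP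
  set b := f * w + f * u /ₘ P * x
  have hab : f = a * x + b * P := by
    linear_combination -x * modByMonic_add_div (f * u) P - f * hwu
  refine ⟨a, b, hab, ha, ?_⟩
  by_cases hb : b = 0
  · rwa [hb, natDegree_zero]
  · have hbP : (b * P).natDegree < P.natDegree + x.natDegree := by
      rw [show b * P = f - a * x by rw [hab]; ring]
      refine (natDegree_sub_le _ _).trans_lt (max_lt hf ?_)
      exact natDegree_mul_le.trans_lt (Nat.add_lt_add_right ha _)
    rw [mul_comm, hPm.natDegree_mul' hb] at hbP
    omega

-- Compare coefficients of `X ^ (deg P + deg x - 1)` in `P' = a * x + b * P`.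
theorem topCoord_logDerivMod_add_trace_inv [PerfectField F] (hx : 0 < x.natDegree) (hPm : P.Monic)
    [hP : Fact (Irreducible P)] (hPx : IsCoprime P x) :
    topCoord hx (logDerivMod x P) +
      x.leadingCoeff * Algebra.trace F (AdjoinRoot P) (AdjoinRoot.mk P x)⁻¹ = 0 := by
  have hP0 : 0 < P.natDegree := hP.out.natDegree_pos
  have hderiv : (derivative P).natDegree < P.natDegree := natDegree_derivative_lt hP0.ne'
  obtain ⟨a, b, hab, ha, hb⟩ := exists_eq_mul_add_mul_of_isCoprime hPm hPx hP0 hx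
    (hderiv.trans_le (Nat.le_add_right _ _))
  have hlog : logDerivMod x P = AdjoinRoot.mk x b := by
    rw [logDerivMod_eq_iff hPx, ← map_mul, AdjoinRoot.mk_eq_mk]
    exact ⟨-a, by linear_combination -hab⟩
  have hinv : (AdjoinRoot.mk P x)⁻¹ = AdjoinRoot.mk P a / AdjoinRoot.mk P (derivative P) := by
    have hxP : AdjoinRoot.mk P x ≠ 0 := (isUnit_adjoinRoot_mk_iff.2 hPx.symm).ne_zero
    rw [eq_div_iff (mk_derivative_ne_zero hP.out), inv_mul_eq_iff_eq_mul₀ hxP, ← map_mul,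
      AdjoinRoot.mk_eq_mk]
    exact ⟨b, by linear_combination hab⟩
  rw [hlog, hinv, trace_div_mk_derivative hPm, topCoord_mk hx hb, topCoord_mk hP0 ha]
  have hcoeff := congrArg (coeff · (P.natDegree - 1 + x.natDegree)) hab
  simp only [coeff_add] at hcoeff
  rw [coeff_eq_zero_of_natDegree_lt (p := derivative P) (by omega),
    coeff_mul_add_eq_of_natDegree_le (Nat.le_sub_one_of_lt ha) le_rfl,
    show P.natDegree - 1 + x.natDegree = (x.natDegree - 1) + P.natDegree by omega,
    coeff_mul_add_eq_of_natDegree_le (Nat.le_sub_one_of_lt hb) le_rfl,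
    hPm.coeff_natDegree] at hcoeff
  rw [leadingCoeff]
  linear_combination -hcoeff

end TopCoord

theorem exists_dvd_one_sub_mul_pow_sub_of_topCoord_eq_zero {p : ℕ} [Fact p.Prime]
    {x P : (ZMod p)[X]} (hx : 0 < x.natDegree) (hPm : P.Monic) (hP : Irreducible P)
    (hPx : IsCoprime P x) (h : topCoord hx (logDerivMod x P) = 0) :
    ∃ r : (ZMod p)[X], P ∣ 1 - x * (r ^ p - r) := by
  have := Fact.mk hP
  have := hPm.finite_adjoinRoot
  have : Finite (AdjoinRoot P) := Module.finite_of_finite (ZMod p)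
  have htrace := topCoord_logDerivMod_add_trace_inv hx hPm hPx
  rw [h, zero_add] at htrace
  obtain ⟨r, hr⟩ := exists_eq_pow_card_sub_of_trace_eq_zero <|
    (mul_eq_zero.1 htrace).resolve_left (leadingCoeff_ne_zero.2 (ne_zero_of_natDegree_gt hx))
  obtain ⟨r, rfl⟩ := AdjoinRoot.mk_surjective r
  have hxP : AdjoinRoot.mk P x ≠ 0 := (isUnit_adjoinRoot_mk_iff.2 hPx.symm).ne_zero
  refine ⟨r, AdjoinRoot.mk_eq_mk.1 ?_⟩
  rw [ZMod.card] at hr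
  rw [map_mul, map_sub, map_pow, ← hr, mul_inv_cancel₀ hxP, map_one]

/-! ### The derivation `π d/dπ` -/

section PowMulDerivative

theorem C_dvd_pow_sub_expand (p : ℕ) [Fact p.Prime] (f : ℤ[X]) :
    C (p : ℤ) ∣ f ^ p - expand ℤ p f := by
  have hmap : (f ^ p - expand ℤ p f).map (Int.castRingHom (ZMod p)) = 0 := by
    rw [Polynomial.map_sub, Polynomial.map_pow, Polynomial.map_expand, ZMod.expand_card, sub_self]
  refine (C_dvd_iff_dvd_coeff _ _).2 fun i => (ZMod.intCast_zmod_eq_zero_iff_dvd _ p).1 ?_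
  rw [← eq_intCast (Int.castRingHom (ZMod p)), ← coeff_map, hmap, coeff_zero]

-- Lift to `ℤ[X]`, differentiate `f ^ p ≡ f(X ^ p) mod p`, and divide by `p`.
theorem exists_pow_sub_one_mul_derivative_eq {p : ℕ} [hp : Fact p.Prime] (f : (ZMod p)[X]) :
    ∃ g : (ZMod p)[X],
      f ^ (p - 1) * derivative f = X ^ (p - 1) * derivative f ^ p + derivative g := by
  obtain ⟨f, rfl⟩ := map_surjective (Int.castRingHom (ZMod p)) (ZMod.ringHom_surjective _) f
  obtain ⟨g, hg⟩ := C_dvd_pow_sub_expand p f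
  have hderiv := congrArg derivative hg
  rw [derivative_sub, derivative_pow, derivative_expand, derivative_C_mul] at hderiv
  simp only [map_natCast] at hderiv
  have hlift : f ^ (p - 1) * derivative f =
      X ^ (p - 1) * expand ℤ p (derivative f) + derivative g := by
    refine mul_left_cancel₀ (Nat.cast_ne_zero.2 hp.out.ne_zero : (p : ℤ[X]) ≠ 0) ?_
    linear_combination hderiv
  refine ⟨g.map (Int.castRingHom (ZMod p)), ?_⟩
  have hmap := congrArg (Polynomial.map (Int.castRingHom (ZMod p))) hlift
  simpa only [Polynomial.map_mul, Polynomial.map_pow, Polynomial.map_add, map_X, map_expand,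
    ZMod.expand_card, ← derivative_map] using hmap

end PowMulDerivative

section Theta

variable (p : ℕ) [hp : Fact p.Prime] {K : Type*} [Field K] [CharP K p] (π : K)

/-- The sum `∑ i < p, π ^ i * t i ^ p`. If `π` is a `p`-basis of `K`, then every element of `K` is
uniquely of this form. -/
def pExpansion : (Fin p → K) →+ K where
  toFun t := ∑ i : Fin p, π ^ (i : ℕ) * t i ^ p
  map_zero' := by simp [hp.out.ne_zero]
  map_add' t t' := by simp only [Pi.add_apply, add_pow_char, mul_add, Finset.sum_add_distrib]

/-- The value at `pExpansion p π t` of the derivation `θ = π d/dπ`, in terms of `t`. -/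
def thetaExpansion : (Fin p → K) →+ K where
  toFun t := ∑ i : Fin p, (i : ℕ) * (π ^ (i : ℕ) * t i ^ p)
  map_zero' := by simp [hp.out.ne_zero]
  map_add' t t' := by simp only [Pi.add_apply, add_pow_char, mul_add, Finset.sum_add_distrib]

/-- The graph of the derivation `θ = π d/dπ`. It is a relation rather than a function, as `π` is not
assumed to be a `p`-basis. -/
def thetaGraph : AddSubgroup (K × K) :=
  ((pExpansion p π).prod (thetaExpansion p π)).range

/-- The sums `u ^ p - u + θ w`. -/
def artinSchreierTheta : AddSubgroup K :=
  ((frobenius K p : K →+ K) - AddMonoidHom.id K).range ⊔ (thetaExpansion p π).range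

/-- `x` times some Artin–Schreier translate `c + u - u ^ p + θ w` of `c` is a logarithmic
derivative `θ t / t`. -/
def IsThetaQuotient (c x : K) : Prop :=
  ∃ (t w : Fin p → K) (u : K), pExpansion p π t ≠ 0 ∧
    thetaExpansion p π t = x * pExpansion p π t * (c + u - u ^ p + thetaExpansion p π w)

variable {p π}

theorem pExpansion_apply (t : Fin p → K) :
    pExpansion p π t = ∑ i : Fin p, π ^ (i : ℕ) * t i ^ p := rfl

theorem thetaExpansion_apply (t : Fin p → K) :
    thetaExpansion p π t = ∑ i : Fin p, (i : ℕ) * (π ^ (i : ℕ) * t i ^ p) := rfl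

theorem mem_artinSchreierTheta {y : K} :
    y ∈ artinSchreierTheta p π ↔ ∃ u w, u ^ p - u + thetaExpansion p π w = y := by
  simp only [artinSchreierTheta, AddSubgroup.mem_sup, AddMonoidHom.mem_range, exists_exists_eq_and]
  rfl

theorem pow_sub_self_mem_artinSchreierTheta (u : K) : u ^ p - u ∈ artinSchreierTheta p π :=
  mem_artinSchreierTheta.2 ⟨u, 0, by rw [map_zero, add_zero]⟩

theorem mem_artinSchreierTheta_of_mem_range {y : K} (hy : y ∈ (thetaExpansion p π).range) :
    y ∈ artinSchreierTheta p π :=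
  AddSubgroup.mem_sup_right hy

theorem pow_mul_mem_range_thetaExpansion (g : K) {y : K} (hy : y ∈ (thetaExpansion p π).range) :
    g ^ p * y ∈ (thetaExpansion p π).range := by
  obtain ⟨t, rfl⟩ := hy
  refine ⟨fun i => g * t i, ?_⟩
  simp only [thetaExpansion_apply, Finset.mul_sum, mul_pow]
  exact Finset.sum_congr rfl fun i _ => by ring

theorem snd_mem_range_thetaExpansion {y : K × K} (hy : y ∈ thetaGraph p π) :
    y.2 ∈ (thetaExpansion p π).range := by
  obtain ⟨t, rfl⟩ := hy
  exact ⟨t, rfl⟩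

theorem pow_mul_pow_mem_thetaGraph (g : K) (j : ℕ) :
    (g ^ p * π ^ j, (j : K) * (g ^ p * π ^ j)) ∈ thetaGraph p π := by
  have hj : (j : K) = (j % p : ℕ) := (CharP.cast_eq_mod K p j)
  have hpow : π ^ (j % p) * (g * π ^ (j / p)) ^ p = g ^ p * π ^ j := by
    conv_rhs => rw [← Nat.mod_add_div j p, pow_add, pow_mul']
    ring
  refine ⟨Pi.single ⟨j % p, Nat.mod_lt _ hp.out.pos⟩ (g * π ^ (j / p)), ?_⟩
  rw [AddMonoidHom.prod_apply, pExpansion_apply, thetaExpansion_apply, hj, ← hpow]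
  simp only [Pi.single_apply, ite_pow, zero_pow hp.out.ne_zero, mul_ite, mul_zero,
    Finset.sum_ite_eq', Finset.mem_univ, if_true]

theorem mk_expansion_eq_sum (t : Fin p → K) :
    (pExpansion p π t, thetaExpansion p π t) =
      ∑ i : Fin p, (t i ^ p * π ^ (i : ℕ), (i : ℕ) * (t i ^ p * π ^ (i : ℕ))) := by
  refine Prod.ext ?_ ?_ <;>
    simp only [Prod.fst_sum, Prod.snd_sum, pExpansion_apply, thetaExpansion_apply, mul_comm (π ^ _)]

theorem mul_mem_thetaGraph {a b a' b' : K} (h : (a, b) ∈ thetaGraph p π)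
    (h' : (a', b') ∈ thetaGraph p π) : (a * a', a * b' + b * a') ∈ thetaGraph p π := by
  obtain ⟨t, ht⟩ := h
  obtain ⟨t', ht'⟩ := h'
  have hsum : (a * a', a * b' + b * a') = ∑ i : Fin p, ∑ j : Fin p,
      ((t i * t' j) ^ p * π ^ (i + j : ℕ),
        ((i + j : ℕ) : K) * ((t i * t' j) ^ p * π ^ (i + j : ℕ))) := by
    rw [AddMonoidHom.prod_apply, mk_expansion_eq_sum] at ht ht'
    simp only [Prod.ext_iff, Prod.fst_sum, Prod.snd_sum] at ht ht' ⊢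
    rw [← ht.1, ← ht.2, ← ht'.1, ← ht'.2]
    simp only [Finset.sum_mul_sum, ← Finset.sum_add_distrib]
    constructor <;> refine Finset.sum_congr rfl fun i _ => Finset.sum_congr rfl fun j _ => ?_
    · ring
    · push_cast
      ring
  rw [hsum]
  exact sum_mem fun i _ => sum_mem fun j _ => pow_mul_pow_mem_thetaGraph _ _

variable [Algebra (ZMod p) K]

theorem pow_mul_pow_mem_range_thetaExpansion (g : K) {j : ℕ} (hj : ¬ p ∣ j) :
    g ^ p * π ^ j ∈ (thetaExpansion p π).range := by
  have hj0 : (j : K) ≠ 0 := fun h => hj ((CharP.cast_eq_zero_iff K p j).1 h)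
  have hmem := snd_mem_range_thetaExpansion (pow_mul_pow_mem_thetaGraph (p := p) (π := π) g j)
  convert ZMod.smul_mem (n := p) hmem (j : ZMod p)⁻¹ using 1
  rw [Algebra.smul_def, map_inv₀, map_natCast, inv_mul_cancel_left₀ hj0]

variable {s S : K}

theorem aeval_mem_thetaGraph (hs : s = S ^ p - π) (f : (ZMod p)[X]) :
    (aeval s f, -π * aeval s (derivative f)) ∈ thetaGraph p π := by
  have hconst (c : ZMod p) : (algebraMap (ZMod p) K c, 0) ∈ thetaGraph p π := by
    simpa only [← map_pow, ZMod.pow_card, pow_zero, mul_one, Nat.cast_zero, zero_mul] using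
      pow_mul_pow_mem_thetaGraph (p := p) (π := π) (algebraMap (ZMod p) K c) 0
  have hgen : (s, -π) ∈ thetaGraph p π := by
    rw [hs]
    simpa using sub_mem (pow_mul_pow_mem_thetaGraph (p := p) (π := π) S 0)
      (pow_mul_pow_mem_thetaGraph (p := p) (π := π) 1 1)
  induction f using Polynomial.induction_on with
  | C c => simpa using hconst c
  | add f g hf hg =>
    rw [derivative_add, map_add, map_add, mul_add]
    exact add_mem hf hg
  | monomial n c ih =>
    rw [pow_succ, ← mul_assoc]
    convert mul_mem_thetaGraph ih hgen using 2
    · rw [map_mul, aeval_X]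
    · rw [derivative_mul (g := X), derivative_X, map_add, map_mul _ _ X, mul_one, aeval_X]
      ring

theorem mul_aeval_derivative_mem_range_thetaExpansion (hs : s = S ^ p - π) (f : (ZMod p)[X]) :
    π * aeval s (derivative f) ∈ (thetaExpansion p π).range := by
  simpa using neg_mem (snd_mem_range_thetaExpansion (aeval_mem_thetaGraph hs f))

theorem mul_pow_sub_pow_mem_range_thetaExpansion (hs : s = S ^ p - π) (hs0 : s ≠ 0) :
    π * s ^ (p - 1) - π ^ p ∈ (thetaExpansion p π).range := by
  have hgeom : s ^ (p - 1) = ∑ i ∈ Finset.range p, (S ^ p) ^ i * π ^ (p - 1 - i) := by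
    refine mul_right_cancel₀ hs0 ?_
    rw [pow_sub_one_mul hp.out.ne_zero, hs, geom_sum₂_mul, sub_pow_char]
  have hsum : π * s ^ (p - 1) - π ^ p = ∑ i ∈ Finset.Ico 1 p, (S ^ i) ^ p * π ^ (p - i) := by
    rw [hgeom, Finset.mul_sum, Finset.range_eq_Ico, Finset.sum_eq_sum_Ico_succ_bot hp.out.pos,
      pow_zero, one_mul, Nat.sub_zero, mul_pow_sub_one hp.out.ne_zero, add_sub_cancel_left]
    refine Finset.sum_congr rfl fun i hi => ?_
    rw [show p - i = (p - 1 - i) + 1 by have := (Finset.mem_Ico.1 hi).2; omega]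
    ring
  rw [hsum]
  refine sum_mem fun i hi => pow_mul_pow_mem_range_thetaExpansion _ ?_
  have hi := Finset.mem_Ico.1 hi
  exact Nat.not_dvd_of_pos_of_lt (by omega) (by omega)

theorem mul_pow_mem_artinSchreierTheta (hs : s = S ^ p - π) (hs0 : s ≠ 0) (n : ℕ) :
    π * s ^ n ∈ artinSchreierTheta p π := by
  induction n using Nat.strong_induction_on with
  | _ n ih =>
    by_cases hn : ((n + 1 : ℕ) : ZMod p) = 0
    · obtain ⟨j, hj⟩ := (ZMod.natCast_eq_zero_iff _ _).1 hn
      obtain ⟨m, rfl⟩ : ∃ m, j = m + 1 := Nat.exists_eq_succ_of_ne_zero fun h => by simp [h] at hj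
      have hnm : n = p * m + (p - 1) := by
        have := hp.out.one_le
        rw [mul_add] at hj
        omega
      have hmn : m < n := by
        have := Nat.mul_le_mul_right m hp.out.two_le
        have := hp.out.two_le
        omega
      convert add_mem (add_mem (mem_artinSchreierTheta_of_mem_range
        (pow_mul_mem_range_thetaExpansion (s ^ m)
          (mul_pow_sub_pow_mem_range_thetaExpansion hs hs0)))
        (pow_sub_self_mem_artinSchreierTheta (π * s ^ m))) (ih m hmn) using 1
      rw [hnm, mul_pow, pow_add, pow_mul']
      ring
    · have hmem := mul_aeval_derivative_mem_range_thetaExpansion hs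
        (C (((n + 1 : ℕ) : ZMod p)⁻¹) * X ^ (n + 1))
      rw [derivative_C_mul, derivative_X_pow, ← mul_assoc, ← C_mul, inv_mul_cancel₀ hn, C_1,
        one_mul, Nat.add_sub_cancel, aeval_X_pow] at hmem
      exact mem_artinSchreierTheta_of_mem_range hmem

theorem mul_aeval_mem_artinSchreierTheta (hs : s = S ^ p - π) (hs0 : s ≠ 0) (h : (ZMod p)[X]) :
    π * aeval s h ∈ artinSchreierTheta p π := by
  rw [aeval_eq_sum_range, Finset.mul_sum]
  refine sum_mem fun n _ => ?_
  rw [mul_smul_comm]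
  exact ZMod.smul_mem (mul_pow_mem_artinSchreierTheta hs hs0 n) _

-- The Cartier operator fixes the logarithmic differential `dP / P`.
theorem logDeriv_sub_pow_mem_range_thetaExpansion (hs : s = S ^ p - π) (hs0 : s ≠ 0)
    {P : (ZMod p)[X]} (hP : aeval s P ≠ 0) :
    π * aeval s (derivative P) / aeval s P - (π * aeval s (derivative P) / aeval s P) ^ p ∈
      (thetaExpansion p π).range := by
  obtain ⟨R, hR⟩ := exists_pow_sub_one_mul_derivative_eq P
  have hR := congrArg (aeval s) hR
  simp only [map_mul, map_pow, map_add, aeval_X] at hR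
  convert add_mem
    (pow_mul_mem_range_thetaExpansion (aeval s (derivative P) / aeval s P)
      (mul_pow_sub_pow_mem_range_thetaExpansion hs hs0))
    (pow_mul_mem_range_thetaExpansion (1 / aeval s P)
      (mul_aeval_derivative_mem_range_thetaExpansion hs R)) using 1
  have hPp := pow_sub_one_mul hp.out.ne_zero (aeval s P)
  have hquot : π * aeval s (derivative P) / aeval s P =
      π * (aeval s P ^ (p - 1) * aeval s (derivative P)) / aeval s P ^ p := by
    rw [← hPp]
    field_simp
  rw [div_pow (π * _), mul_pow, hquot, hR, div_pow, div_pow, one_pow]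
  field_simp
  ring

theorem pow_sub_mul_logDeriv_mem_artinSchreierTheta (hs : s = S ^ p - π) (hs0 : s ≠ 0)
    {P : (ZMod p)[X]} (hP : aeval s P ≠ 0) (r : K) :
    (r ^ p - r) * (π * aeval s (derivative P) / aeval s P) ∈ artinSchreierTheta p π := by
  set E := π * aeval s (derivative P) / aeval s P
  convert add_mem (mem_artinSchreierTheta_of_mem_range (pow_mul_mem_range_thetaExpansion r
    (logDeriv_sub_pow_mem_range_thetaExpansion hs hs0 hP)))
    (pow_sub_self_mem_artinSchreierTheta (r * E)) using 1
  ring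

end Theta

section Realizable

variable {p : ℕ} [hp : Fact p.Prime]

theorem derivative_pow_char_sub_X (g : (ZMod p)[X]) : derivative (g ^ p - X) = -1 := by
  rw [derivative_sub, derivative_X, derivative_pow, CharP.cast_eq_zero, map_zero, zero_mul,
    zero_mul, zero_sub]

theorem natDegree_pow_char_sub_X {g : (ZMod p)[X]} (hg : 2 < p * g.natDegree) :
    (g ^ p - X).natDegree = p * g.natDegree := by
  rw [natDegree_sub_eq_left_of_natDegree_lt, natDegree_pow]
  rw [natDegree_pow, natDegree_X]
  omega

theorem ne_zero_of_isCoprime_pow_char_sub_X {g A : (ZMod p)[X]} (hg : 2 < p * g.natDegree)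
    (hA : IsCoprime A (g ^ p - X)) : A ≠ 0 := by
  rintro rfl
  have hdeg := natDegree_eq_zero_of_isUnit (isCoprime_zero_left.1 hA)
  rw [natDegree_pow_char_sub_X hg] at hdeg
  omega

variable {K : Type*} [Field K] [Algebra (ZMod p) K]

theorem eq_aeval_pow_sub (s : K) (g : (ZMod p)[X]) : s = aeval s g ^ p - aeval s (g ^ p - X) := by
  rw [map_sub, map_pow, aeval_X, sub_sub_cancel]

variable [CharP K p]

/-- The classes `w` modulo `x` with a representative `h` such that `h / A`, evaluated at `s`, is
congruent modulo the sums `u ^ p - u + θ w` to `f' / (A * f)` for some polynomial `f`. -/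
def realizableClasses (s π : K) (A x : (ZMod p)[X]) : AddSubmonoid (AdjoinRoot x) where
  carrier := {w | ∃ f h : (ZMod p)[X], AdjoinRoot.mk x h = w ∧ aeval s f ≠ 0 ∧
    aeval s (derivative f) / (aeval s A * aeval s f) - aeval s h / aeval s A ∈
      artinSchreierTheta p π}
  zero_mem' := ⟨1, 0, map_zero _, by simp, by simp⟩
  add_mem' := by
    rintro _ _ ⟨f, h, rfl, hf, hB⟩ ⟨f', h', rfl, hf', hB'⟩
    refine ⟨f * f', h + h', map_add _ _ _, by rw [map_mul]; exact mul_ne_zero hf hf', ?_⟩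
    convert add_mem hB hB' using 1
    rw [derivative_mul, map_add, map_add, map_mul, map_mul, map_mul]
    field_simp
    ring

theorem mem_of_mem_span_zmod {M : Type*} [AddCommGroup M] [Module (ZMod p) M] {N : AddSubmonoid M}
    {T : Set M} (hT : T ⊆ N) {w : M} (hw : w ∈ Submodule.span (ZMod p) T) : w ∈ N := by
  induction hw using Submodule.span_induction with
  | mem w hw => exact hT hw
  | zero => exact zero_mem N
  | add w w' _ _ h h' => exact add_mem h h'
  | smul c w _ h =>
    rw [← ZMod.natCast_zmod_val c, Nat.cast_smul_eq_nsmul]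
    exact nsmul_mem h _

theorem logDerivMod_one_add_mul {R : Type*} [CommRing R] (x b : R[X]) :
    logDerivMod x (1 + x * b) = AdjoinRoot.mk x (derivative x * b) := by
  have hcop : IsCoprime (1 + x * b) x := ⟨1, -b, by ring⟩
  rw [logDerivMod_eq_iff hcop, ← map_mul, AdjoinRoot.mk_eq_mk, derivative_add, derivative_one,
    derivative_mul]
  exact ⟨b * derivative x * b - derivative b, by ring⟩

variable {s : K} {g A : (ZMod p)[X]}

theorem logDerivMod_mem_realizableClasses (hs : Transcendental (ZMod p) s) (hA : A ≠ 0)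
    {P r : (ZMod p)[X]} (hP : P ≠ 0) (hPx : IsCoprime P ((g ^ p - X) * A))
    (hr : P ∣ 1 - (g ^ p - X) * A * (r ^ p - r)) :
    logDerivMod ((g ^ p - X) * A) P ∈
      realizableClasses s (aeval s (g ^ p - X)) A ((g ^ p - X) * A) := by
  obtain ⟨k, hk⟩ := hr
  have hs0 : s ≠ 0 := fun h => hs (h ▸ isAlgebraic_zero)
  have hP0 : aeval s P ≠ 0 := fun h => hP (transcendental_iff.1 hs P h)
  have hA0 : aeval s A ≠ 0 := fun h => hA (transcendental_iff.1 hs A h)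
  refine ⟨P, derivative P * k, ?_, hP0, ?_⟩
  · rw [eq_comm, logDerivMod_eq_iff hPx, ← map_mul, AdjoinRoot.mk_eq_mk]
    exact ⟨-(derivative P * (r ^ p - r)), by linear_combination -derivative P * hk⟩
  · convert pow_sub_mul_logDeriv_mem_artinSchreierTheta (eq_aeval_pow_sub s g) hs0 hP0 (aeval s r)
      using 1
    have hk := congrArg (aeval s) hk
    rw [map_sub, map_one, map_mul, map_mul, map_sub (aeval s) (r ^ p), map_pow (aeval s) r,
      map_mul (aeval s) P] at hk
    rw [map_mul]
    field_simp
    linear_combination aeval s (derivative P) * hk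

theorem mk_neg_X_mul_mem_realizableClasses (hs : Transcendental (ZMod p) s)
    (hg : 2 < p * g.natDegree) (hA : IsCoprime A (g ^ p - X)) :
    AdjoinRoot.mk ((g ^ p - X) * A) (-(X * A)) ∈
      realizableClasses s (aeval s (g ^ p - X)) A ((g ^ p - X) * A) := by
  have hϖ := natDegree_pow_char_sub_X hg
  have hA0 := ne_zero_of_isCoprime_pow_char_sub_X hg hA
  obtain ⟨e, f, hef⟩ := hA
  set ϖ := g ^ p - X
  set x := ϖ * A
  have hxdeg : x.natDegree = p * g.natDegree + A.natDegree := by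
    rw [natDegree_mul (ne_zero_of_natDegree_gt (hϖ ▸ hg)) hA0, hϖ]
  have hx : 0 < x.natDegree := by omega
  have hlog : logDerivMod x (1 + x * (A * (e * X))) = AdjoinRoot.mk x (-(X * A)) := by
    rw [logDerivMod_one_add_mul, AdjoinRoot.mk_eq_mk, derivative_mul, derivative_pow_char_sub_X]
    exact ⟨derivative A * (e * X) + f * X, by linear_combination (-X * A) * hef⟩
  have htop : topCoord hx (logDerivMod x (1 + x * (A * (e * X)))) = 0 := by
    have hdeg : (-(X * A)).natDegree = A.natDegree + 1 := by
      rw [natDegree_neg, natDegree_X_mul hA0]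
    rw [hlog, topCoord_mk hx (by omega)]
    exact coeff_eq_zero_of_natDegree_lt (by omega)
  have hspan := logDerivMod_mem_span (topCoord hx) hx ⟨1, -(A * (e * X)), by ring⟩ htop
  rw [← hlog]
  refine mem_of_mem_span_zmod ?_ hspan
  rintro _ ⟨P, ⟨⟨hPm, hPi⟩, hPx, hPtop⟩, rfl⟩
  obtain ⟨r, hr⟩ := exists_dvd_one_sub_mul_pow_sub_of_topCoord_eq_zero hx hPm hPi hPx hPtop
  exact logDerivMod_mem_realizableClasses hs hA0 hPm.ne_zero hPx hr

theorem isThetaQuotient_aeval_mul (hs : Transcendental (ZMod p) s)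
    (hg : 2 < p * g.natDegree) (hA : IsCoprime A (g ^ p - X)) :
    IsThetaQuotient p (aeval s (g ^ p - X)) s (aeval s ((g ^ p - X) * A)) := by
  obtain ⟨f, h, hh, hf, hB⟩ := mk_neg_X_mul_mem_realizableClasses hs hg hA
  obtain ⟨k, hk⟩ := AdjoinRoot.mk_eq_mk.1 hh
  have hs' := eq_aeval_pow_sub s g
  have hs0 : s ≠ 0 := fun h => hs (h ▸ isAlgebraic_zero)
  have hA0 : aeval s A ≠ 0 := fun h =>
    ne_zero_of_isCoprime_pow_char_sub_X hg hA (transcendental_iff.1 hs A h)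
  have hmem : aeval s (derivative f) / (aeval s A * aeval s f) + s ∈
      artinSchreierTheta p (aeval s (g ^ p - X)) := by
    convert add_mem hB (mul_aeval_mem_artinSchreierTheta hs' hs0 k) using 1
    have hk := congrArg (aeval s) hk
    simp only [map_sub _ h, map_neg, map_mul, aeval_X] at hk
    field_simp
    linear_combination aeval s f * hk
  obtain ⟨u, w, huw⟩ := mem_artinSchreierTheta.1 hmem
  obtain ⟨t, ht⟩ := aeval_mem_thetaGraph hs' f
  simp only [AddMonoidHom.prod_apply, Prod.mk.injEq] at ht
  refine ⟨t, -w, u, by rwa [ht.1], ?_⟩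
  rw [ht.1, ht.2, map_neg, map_mul]
  field_simp at huw
  linear_combination aeval s (g ^ p - X) * huw

end Realizable

/-! ### Orders of `θ t / t` -/

section ValuationBound

theorem addValuation_sum_eq_inf {R Γ : Type*} [CommRing R] [LinearOrderedAddCommMonoidWithTop Γ]
    (V : AddValuation R Γ) {ι : Type*} {s : Finset ι} {y : ι → R}
    (hy : (s : Set ι).Pairwise fun i j => V (y i) = V (y j) → V (y i) = ⊤) :
    V (∑ i ∈ s, y i) = s.inf fun i => V (y i) := by
  classical
  induction s using Finset.induction_on with
  | empty => rw [Finset.sum_empty, AddValuation.map_zero, Finset.inf_empty]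
  | insert a s ha ih =>
    rw [Finset.coe_insert, Set.pairwise_insert_of_notMem (Finset.mem_coe.not.2 ha)] at hy
    obtain ⟨hs, hya⟩ := hy
    rw [Finset.sum_insert ha, Finset.inf_insert, ← ih hs]
    by_cases hne : V (y a) = V (∑ i ∈ s, y i)
    · have htop : V (y a) = ⊤ := by
        rcases s.eq_empty_or_nonempty with rfl | hs'
        · rw [hne, Finset.sum_empty, AddValuation.map_zero]
        · obtain ⟨i, hi, hinf⟩ := s.exists_mem_eq_inf hs' fun i => V (y i)
          exact (hya i hi).1 (by rw [hne, ih hs, hinf])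
      rw [← hne, htop, min_self, ← top_le_iff]
      exact (le_min htop.ge (htop.symm.trans hne).le).trans (AddValuation.map_add V _ _)
    · exact AddValuation.map_add_of_distinct_val V hne

theorem addValuation_sum_le_of_eq_add_mul {R : Type*} [CommRing R] (V : AddValuation R (WithTop ℤ))
    {p : ℕ} {y : Fin p → R} (hy : ∀ i, V (y i) ≠ ⊤ → ∃ n : ℤ, V (y i) = (i + p * n : ℤ))
    (j : Fin p) : V (∑ i, y i) ≤ V (y j) := by
  rw [addValuation_sum_eq_inf V]
  · exact Finset.inf_le (Finset.mem_univ j)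
  · intro i _ j _ hij heq
    by_contra htop
    obtain ⟨n, hn⟩ := hy i htop
    obtain ⟨m, hm⟩ := hy j (heq ▸ htop)
    rw [hn, hm, WithTop.coe_inj] at heq
    have hmod := congrArg (· % (p : ℤ)) heq
    simp only [Int.add_mul_emod_self_left, ← Int.natCast_mod, Nat.mod_eq_of_lt i.2,
      Nat.mod_eq_of_lt j.2, Nat.cast_inj] at hmod
    exact hij (Fin.ext hmod)

variable {K : Type*} [Field K] {V : AddValuation K (WithTop ℤ)} {p : ℕ} [hp : Fact p.Prime]
  {π : K}

theorem addValuation_pow_mul_pow (hπ : V π = 1) (i : ℕ) {t : K}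
    (ht : V (π ^ i * t ^ p) ≠ ⊤) : ∃ n : ℤ, V (π ^ i * t ^ p) = (i + p * n : ℤ) := by
  have ht0 : V t ≠ ⊤ := by
    intro h
    rw [AddValuation.top_iff] at h
    simp [h, hp.out.ne_zero] at ht
  obtain ⟨n, hn⟩ := WithTop.ne_top_iff_exists.1 ht0
  refine ⟨n, ?_⟩
  rw [AddValuation.map_mul, AddValuation.map_pow, AddValuation.map_pow, hπ, ← hn, nsmul_one,
    ← WithTop.coe_nsmul, nsmul_eq_mul]
  norm_cast

theorem addValuation_add_sub_pow_eq {c : K} (hc : 0 ≤ V c)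
    (hcn : ∀ u, 0 ≤ V u → V (c + u - u ^ p) ≤ 0) (u : K) :
    ∃ n : ℤ, n ≤ 0 ∧ V (c + u - u ^ p) = (p * n : ℤ) := by
  rcases le_or_gt 0 (V u) with hu | hu
  · refine ⟨0, le_rfl, ?_⟩
    have hnonneg : 0 ≤ V (c + u - u ^ p) := by
      refine AddValuation.map_le_sub V (AddValuation.map_le_add V hc hu) ?_
      rw [AddValuation.map_pow]
      exact nsmul_nonneg hu p
    simpa using le_antisymm (hcn u hu) hnonneg
  · obtain ⟨n, hn⟩ := WithTop.ne_top_iff_exists.1 (hu.trans (WithTop.coe_lt_top 0)).ne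
    rw [← hn] at hu
    have hn0 : n < 0 := by exact_mod_cast hu
    refine ⟨n, hn0.le, ?_⟩
    have hcu : V (c + u) = n := by
      rw [hn]
      exact AddValuation.map_add_eq_of_lt_right V (hn ▸ hu.trans_le hc)
    have hup : V (u ^ p) = (p * n : ℤ) := by
      rw [AddValuation.map_pow, ← hn, ← WithTop.coe_nsmul, nsmul_eq_mul]
    rw [AddValuation.map_sub_swap, ← hup]
    refine AddValuation.map_sub_eq_of_lt_left V ?_
    rw [hup, hcu, WithTop.coe_lt_coe]
    nlinarith [hp.out.one_lt]

variable [CharP K p]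

theorem addValuation_pExpansion_le_thetaExpansion (hπ : V π = 1) (t : Fin p → K) :
    V (pExpansion p π t) ≤ V (thetaExpansion p π t) := by
  rw [thetaExpansion_apply]
  refine AddValuation.map_le_sum V fun i _ => ?_
  rw [AddValuation.map_mul]
  refine (addValuation_sum_le_of_eq_add_mul V
    (fun i => addValuation_pow_mul_pow hπ i) i).trans (le_add_of_nonneg_left ?_)
  exact natCast_mem (AddValuation.toValuation V).integer i

theorem addValuation_add_thetaExpansion_le (hπ : V π = 1) {y : K} {n : ℤ}
    (hy : V y = (p * n : ℤ)) (w : Fin p → K) : V (y + thetaExpansion p π w) ≤ V y := by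
  have hsum : y + thetaExpansion p π w =
      ∑ i : Fin p, ((if i = 0 then y else 0) + π ^ (i : ℕ) * ((i : ℕ) * w i) ^ p) := by
    rw [Finset.sum_add_distrib, Finset.sum_ite_eq' Finset.univ,
      if_pos (Finset.mem_univ _), thetaExpansion_apply]
    simp only [← frobenius_def, map_mul, map_natCast, mul_left_comm]
  rw [hsum]
  have hle := addValuation_sum_le_of_eq_add_mul V (y := fun i =>
    (if i = 0 then y else 0) + π ^ (i : ℕ) * ((i : ℕ) * w i) ^ p) ?_ 0
  · simpa [hp.out.ne_zero] using hle
  intro i hi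
  rcases eq_or_ne i 0 with rfl | hi0
  · exact ⟨n, by simpa [hp.out.ne_zero] using hy⟩
  · rw [if_neg hi0, zero_add] at hi ⊢
    exact addValuation_pow_mul_pow hπ i hi

theorem IsThetaQuotient.nonneg {c x : K} (hπ : V π = 1) (hc : 0 ≤ V c)
    (hcn : ∀ u, 0 ≤ V u → V (c + u - u ^ p) ≤ 0) (h : IsThetaQuotient p π c x) : 0 ≤ V x := by
  obtain ⟨t, w, u, ht, h⟩ := h
  obtain ⟨n, hn, hy⟩ := addValuation_add_sub_pow_eq hc hcn u
  have hle := addValuation_pExpansion_le_thetaExpansion hπ t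
  have hdle : V (c + u - u ^ p + thetaExpansion p π w) ≤ 0 := by
    refine (addValuation_add_thetaExpansion_le hπ hy w).trans ?_
    rw [hy]
    exact_mod_cast mul_nonpos_of_nonneg_of_nonpos (Nat.cast_nonneg p) hn
  rw [h, AddValuation.map_mul, AddValuation.map_mul] at hle
  have ht' : V (pExpansion p π t) ≠ ⊤ := fun h => ht ((AddValuation.top_iff V).1 h)
  generalize V (pExpansion p π t) = b at hle ht'
  generalize V (c + u - u ^ p + thetaExpansion p π w) = d at hle hdle
  generalize V x = a at hle ⊢
  lift b to ℤ using ht'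
  lift d to ℤ using (hdle.trans_lt (WithTop.coe_lt_top 0)).ne
  induction a using WithTop.recTopCoe with
  | top => exact le_top
  | coe a =>
    norm_cast at *
    omega

end ValuationBound

/-! ### Valuations of function fields -/

section FunctionField

section RatFunc

variable (F K : Type*) [Field F] [Field K] [Algebra F K] [Algebra (RatFunc F) K]
  [IsScalarTower F (RatFunc F) K] [FiniteDimensional (RatFunc F) K]

theorem trdeg_eq_one_of_finiteDimensional_ratFunc : Algebra.trdeg F K = 1 := by
  have hK := lift_trdeg_add_eq F (RatFunc F) (A := K)
  have hF := trdeg_add_eq F F[X] (A := RatFunc F)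
  have : Algebra.IsAlgebraic F[X] (RatFunc F) :=
    (IsFractionRing.comap_isAlgebraic_iff (K := RatFunc F)).2 inferInstance
  rw [trdeg_eq_zero (R := F[X]), add_zero, Polynomial.trdeg_of_isDomain] at hF
  rw [trdeg_eq_zero (R := RatFunc F), Cardinal.lift_zero, add_zero, ← hF] at hK
  simpa using hK.symm

theorem essFiniteType_of_finiteDimensional_ratFunc : Algebra.EssFiniteType F K := by
  have : Algebra.EssFiniteType F[X] (RatFunc F) :=
    Algebra.EssFiniteType.of_isLocalization _ (nonZeroDivisors F[X])
  have : Algebra.EssFiniteType F (RatFunc F) := Algebra.EssFiniteType.comp _ F[X] _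
  exact Algebra.EssFiniteType.comp _ (RatFunc F) _

end RatFunc

theorem isAlgebraic_of_trdeg_eq.{u, v, w} (F : Type u) {A : Type v} {K : Type w} [Field F]
    [CommRing A] [IsDomain A] [Field K] [Algebra F A] [Algebra F K] [Algebra A K]
    [IsScalarTower F A K] [FaithfulSMul A K] [Algebra.EssFiniteType F K]
    (htr : Cardinal.lift.{w} (Algebra.trdeg F A) = Cardinal.lift.{v} (Algebra.trdeg F K)) :
    Algebra.IsAlgebraic A K := by
  have hadd := lift_trdeg_add_eq F A (A := K)
  rw [htr, ← Cardinal.lift_add, Cardinal.lift_inj] at hadd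
  exact trdeg_eq_zero_iff.1 (Cardinal.eq_of_add_eq_add_left (hadd.trans (add_zero _).symm)
    (trdeg_lt_aleph0 F K))

theorem rank_lt_aleph0_of_isAlgebraic (A K : Type*) [CommRing A] [IsDomain A] [Field K]
    [Algebra A K] [FaithfulSMul A K] [Algebra.EssFiniteType A K] [Algebra.IsAlgebraic A K] :
    Module.rank A K < Cardinal.aleph0 := by
  let : Algebra (FractionRing A) K := FractionRing.liftAlgebra _ _
  have := FractionRing.isScalarTower_liftAlgebra A K
  have : Algebra.IsAlgebraic (FractionRing A) K :=
    IsFractionRing.comap_isAlgebraic_iff.1 ‹Algebra.IsAlgebraic A K›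
  have : Algebra.EssFiniteType (FractionRing A) K := .of_comp A _ _
  have := Algebra.finite_of_essFiniteType_of_isAlgebraic (F := FractionRing A) (E := K)
  rw [← IsFractionRing.rank_right_eq (S := FractionRing A)]
  exact Module.rank_lt_aleph0 _ _

end FunctionField

section FiniteQuotient

theorem linearIndependent_of_comp_of_isTorsionFree {A κ M N ι : Type*} [CommRing A] [IsDomain A]
    [IsPrincipalIdealRing A] [CommRing κ] [Nontrivial κ] [Algebra A κ] [AddCommGroup M]
    [Module A M] [Module.IsTorsionFree A M] [AddCommGroup N] [Module A N] [Module κ N]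
    [IsScalarTower A κ N] (f : M →ₗ[A] N) {b : ι → M} (hb : LinearIndependent κ (f ∘ b)) :
    LinearIndependent A b := by
  let := Classical.arbitrary (NormalizedGCDMonoid A)
  rw [linearIndependent_iff'] at hb ⊢
  intro t g hg i hi
  obtain ⟨g', hgg', hg'⟩ := t.extract_gcd g ⟨i, hi⟩
  by_contra hgi
  have hgcd : t.gcd g ≠ 0 := fun h => hgi (Finset.gcd_eq_zero_iff.1 h i hi)
  have hrel : ∑ j ∈ t, g' j • b j = 0 := by
    refine (smul_eq_zero_iff_right hgcd).1 (Eq.trans ?_ hg)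
    rw [Finset.smul_sum]
    exact Finset.sum_congr rfl fun j hj => by rw [hgg' j hj, mul_smul]
  have hzero : ∀ j ∈ t, algebraMap A κ (g' j) = 0 := by
    refine hb t _ ?_
    simpa only [map_sum, map_smul, map_zero, algebraMap_smul, Function.comp_apply] using
      congrArg f hrel
  obtain ⟨a, ha⟩ := t.gcd_eq_sum_mul g'
  refine one_ne_zero (α := κ) ?_
  rw [← map_one (algebraMap A κ), ← hg', ha, map_sum]
  exact Finset.sum_eq_zero fun j hj => by rw [map_mul, hzero j hj, zero_mul]

theorem finite_quotient_map_of_rank_lt_aleph0 {A B : Type*} [CommRing A] [IsDomain A]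
    [IsPrincipalIdealRing A] [CommRing B] [Algebra A B] [Module.IsTorsionFree A B]
    (hrank : Module.rank A B < Cardinal.aleph0) (I : Ideal A) [I.IsMaximal] [Finite (A ⧸ I)] :
    Finite (B ⧸ I.map (algebraMap A B)) := by
  let : Field (A ⧸ I) := Ideal.Quotient.field I
  let b := Module.Basis.ofVectorSpace (A ⧸ I) (B ⧸ I.map (algebraMap A B))
  obtain ⟨c, hc : Ideal.Quotient.mk _ ∘ c = b⟩ := Ideal.Quotient.mk_surjective.comp_left b
  have hli : LinearIndependent A c := by
    refine linearIndependent_of_comp_of_isTorsionFree (κ := A ⧸ I)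
      (Ideal.Quotient.mkₐ A (I.map (algebraMap A B))).toLinearMap ?_
    change LinearIndependent _ (Ideal.Quotient.mk _ ∘ c)
    rw [hc]
    exact b.linearIndependent
  have := Cardinal.lt_aleph0_iff_finite.1 (hli.cardinal_le_rank.trans_lt hrank)
  have := Module.Finite.of_basis b
  exact Module.finite_of_finite (A ⧸ I)

theorem exists_notMem_mul_pow_mem {R : Type*} [CommRing R] (I q : Ideal R)
    [IsArtinianRing (R ⧸ I)] [q.IsPrime] (hIq : I ≤ q) :
    ∃ e ∉ q, ∃ N : ℕ, ∀ b ∈ q, e * b ^ N ∈ I := by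
  let J := q.map (Ideal.Quotient.mk I)
  obtain ⟨N, hN⟩ := IsArtinian.monotone_stabilizes
    (⟨fun n => OrderDual.toDual (J ^ n), fun _ _ h => Ideal.pow_le_pow_right h⟩ :
      ℕ →o (Ideal (R ⧸ I))ᵒᵈ)
  have hstable : ∀ m, N ≤ m → J ^ N = J ^ m := hN
  have hJ : IsIdempotentElem (J ^ (N + 1)) := by
    rw [IsIdempotentElem, ← pow_add]
    exact (hstable _ (by lia)).symm.trans (hstable _ (by lia))
  obtain ⟨f, hf, hspan⟩ :=
    (Ideal.isIdempotentElem_iff_of_fg _ (IsNoetherian.noetherian _)).1 hJ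
  obtain ⟨f, rfl⟩ := Ideal.Quotient.mk_surjective f
  have hfq : f ∈ q := by
    have hfJ : Ideal.Quotient.mk I f ∈ J :=
      Ideal.pow_le_self N.succ_ne_zero (hspan ▸ Submodule.mem_span_singleton_self _)
    rwa [← Ideal.mem_comap, Ideal.comap_map_of_surjective' _ Ideal.Quotient.mk_surjective,
      Ideal.mk_ker, sup_eq_left.2 hIq] at hfJ
  refine ⟨1 - f, fun h => ‹q.IsPrime›.one_notMem (by simpa using q.add_mem h hfq), N + 1,
    fun b hb => ?_⟩
  have hbJ := Ideal.pow_mem_pow (Ideal.mem_map_of_mem (Ideal.Quotient.mk I) hb) (N + 1)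
  rw [hspan] at hbJ
  obtain ⟨d, hd⟩ := Ideal.mem_span_singleton.1 hbJ
  rw [← Ideal.Quotient.eq_zero_iff_mem, map_mul, map_pow, hd, map_sub, map_one, ← mul_assoc,
    sub_mul, one_mul, hf.eq, sub_self, zero_mul]

end FiniteQuotient

theorem exists_natDegree_lt_of_leadingCoeff_mem {R A : Type*} [CommRing R] [CommRing A]
    [Algebra R A] {I : Ideal R} {x : A} {F : R[X]} (hF : aeval x F = 0) (hdeg : F.natDegree ≠ 0)
    (hlead : F.leadingCoeff ∈ I) {g : R} (hg : algebraMap R A g = algebraMap R A F.leadingCoeff * x)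
    (hgI : g ∈ I) (hcoeff : ∃ i, F.coeff i ∉ I) :
    ∃ G : R[X], G.natDegree < F.natDegree ∧ aeval x G = 0 ∧ ∃ i, G.coeff i ∉ I := by
  obtain ⟨d, hd⟩ := Nat.exists_eq_add_one_of_ne_zero hdeg
  -- Trade the leading term `c x ^ (d + 1)` for the term `(c x) x ^ d` with coefficient `c x ∈ R`.
  have hsplit := F.eraseLead_add_C_mul_X_pow
  rw [hd] at hsplit
  refine ⟨F.eraseLead + C g * X ^ d, (natDegree_add_le _ _).trans_lt (max_lt ?_ ?_), ?_, ?_⟩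
  · exact F.eraseLead_natDegree_le.trans_lt (by lia)
  · exact (natDegree_C_mul_X_pow_le _ _).trans_lt (by lia)
  · have heval := congrArg (aeval x) hsplit
    simp only [map_add, map_mul, map_pow, aeval_C, aeval_X, hF] at heval
    simp only [map_add, map_mul, map_pow, aeval_C, aeval_X, hg]
    linear_combination heval
  · obtain ⟨i, hi⟩ := hcoeff
    refine ⟨i, fun hmem => hi ?_⟩
    have hmono : ∀ {c : R} (k : ℕ), c ∈ I → (C c * X ^ k).coeff i ∈ I := fun k hc => by
      rw [coeff_C_mul]
      exact Ideal.mul_mem_right _ _ hc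
    rw [coeff_add, add_mem_cancel_right (hmono d hgI)] at hmem
    rw [← hsplit, coeff_add]
    exact add_mem hmem (hmono _ hlead)

section ValuationCenter

open Valuation

variable {R K Γ₀ : Type*} [CommRing R] [Field K] [Algebra R K]
  [LinearOrderedCommGroupWithZero Γ₀] (v : Valuation K Γ₀)

/-- The center on `R` of a valuation `v` which is bounded by one on `R`: the prime ideal of the
elements of valuation less than one. -/
def valuationCenter (hR : ∀ r : R, v (algebraMap R K r) ≤ 1) : Ideal R where
  carrier := {r | v (algebraMap R K r) < 1}
  zero_mem' := by simp
  add_mem' ha hb := by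
    rw [Set.mem_ofPred_eq, map_add]
    exact v.map_add_lt ha hb
  smul_mem' r a ha := by
    rw [Set.mem_ofPred_eq, smul_eq_mul, map_mul, map_mul]
    exact mul_lt_one_of_nonneg_of_lt_one_right (hR r) zero_le ha

variable {v} {hR : ∀ r : R, v (algebraMap R K r) ≤ 1}

theorem mem_valuationCenter {r : R} : r ∈ valuationCenter v hR ↔ v (algebraMap R K r) < 1 :=
  Iff.rfl

theorem notMem_valuationCenter {r : R} :
    r ∉ valuationCenter v hR ↔ v (algebraMap R K r) = 1 := by
  rw [mem_valuationCenter, not_lt, (hR r).ge_iff_eq]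

instance valuationCenter_isPrime : (valuationCenter v hR).IsPrime where
  ne_top' h := by
    have := (Ideal.eq_top_iff_one _).1 h
    rw [mem_valuationCenter] at this
    simp at this
  mem_or_mem' {a b} hab := by
    by_contra! hcon
    rw [notMem_valuationCenter, notMem_valuationCenter] at hcon
    rw [mem_valuationCenter, map_mul, map_mul, hcon.1, hcon.2, mul_one] at hab
    exact hab.false

theorem le_one_of_isIntegral (hR : ∀ r : R, v (algebraMap R K r) ≤ 1) {x : K}
    (hx : IsIntegral R x) : v x ≤ 1 := by
  let : Algebra R v.integer := ((algebraMap R K).codRestrict v.integer hR).toAlgebra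
  have : IsScalarTower R v.integer K := .of_algebraMap_eq fun _ => rfl
  exact (integer.integers v).mem_of_integral hx.tower_top

theorem exists_notMem_valuationCenter_mul_eq [IsIntegrallyClosedIn R K] {x : K} (hx : v x ≤ 1)
    {F : R[X]} (hF : aeval x F = 0) (hcoeff : ∃ i, F.coeff i ∉ valuationCenter v hR) :
    ∃ h ∉ valuationCenter v hR, ∃ a : R, algebraMap R K h * x = algebraMap R K a := by
  induction hn : F.natDegree using Nat.strong_induction_on generalizing F with
  | _ n ih =>
  subst hn
  obtain ⟨g, hg⟩ : ∃ g : R, algebraMap R K g = algebraMap R K F.leadingCoeff * x := by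
    rw [← Algebra.smul_def]
    exact IsIntegrallyClosedIn.isIntegral_iff.1 (isIntegral_leadingCoeff_smul F x hF)
  by_cases hlead : F.leadingCoeff ∈ valuationCenter v hR
  swap
  · exact ⟨_, hlead, g, hg.symm⟩
  have hgv : g ∈ valuationCenter v hR := by
    rw [mem_valuationCenter, hg, map_mul]
    exact mul_lt_one_of_nonneg_of_lt_one_left zero_le hlead hx
  have hdeg : F.natDegree ≠ 0 := fun h0 => by
    obtain ⟨i, hi⟩ := hcoeff
    rw [leadingCoeff, h0] at hlead
    rw [eq_C_of_natDegree_eq_zero h0, coeff_C] at hi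
    split_ifs at hi
    · exact hi hlead
    · exact hi (zero_mem _)
  obtain ⟨G, hGdeg, hG, hGcoeff⟩ :=
    exists_natDegree_lt_of_leadingCoeff_mem hF hdeg hlead hg hgv hcoeff
  exact ih _ hGdeg hG hGcoeff rfl

variable {A : Type*} [CommRing A] [IsDomain A] [IsPrincipalIdealRing A] [Algebra A K]

theorem exists_aeval_eq_zero_and_coeff_notMem [FaithfulSMul A K] {x : K} (hx : IsAlgebraic A x)
    {I : Ideal A} (hI : I ≠ ⊤) : ∃ F : A[X], aeval x F = 0 ∧ ∃ i, F.coeff i ∉ I := by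
  let := Classical.arbitrary (NormalizedGCDMonoid A)
  obtain ⟨F, hF0, hF⟩ := hx
  refine ⟨F.primPart, aeval_primPart_eq_zero hF0 hF, ?_⟩
  obtain ⟨P, rfl⟩ := IsPrincipalIdealRing.principal I
  by_contra! hcon
  have hP : C P ∣ F.primPart :=
    (C_dvd_iff_dvd_coeff _ _).2 fun i => Ideal.mem_span_singleton.1 (hcon i)
  exact hI (Ideal.span_singleton_eq_top.2 (F.isPrimitive_primPart P hP))

theorem exists_forall_isIntegral_mul_pow [FaithfulSMul A K] [Ring.HasFiniteQuotients A]
    (hrank : Module.rank A K < Cardinal.aleph0) {hA : ∀ a : A, v (algebraMap A K a) ≤ 1}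
    (hne : valuationCenter v hA ≠ ⊥) :
    ∃ (w : K) (N : ℕ), 1 < v w ∧
      ∀ b, IsIntegral A b → v b < 1 → IsIntegral A (w * b ^ N) := by
  let B := integralClosure A K
  have hB (b : B) : v (algebraMap B K b) ≤ 1 := le_one_of_isIntegral hA b.2
  obtain ⟨P, hP⟩ := IsPrincipalIdealRing.principal (valuationCenter v hA)
  have : (valuationCenter v hA).IsMaximal := valuationCenter_isPrime.isMaximal hne
  have := Ring.HasFiniteQuotients.finiteQuotient hne
  have hrankB : Module.rank A B < Cardinal.aleph0 :=
    (LinearMap.rank_le_of_injective B.val.toLinearMap Subtype.val_injective).trans_lt hrank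
  have := finite_quotient_map_of_rank_lt_aleph0 hrankB (valuationCenter v hA)
  obtain ⟨e, he, N, hN⟩ := exists_notMem_mul_pow_mem
    ((valuationCenter v hA).map (algebraMap A B)) (valuationCenter v hB)
    (Ideal.map_le_iff_le_comap.2 fun a ha => by exact ha)
  have hPv : v (algebraMap A K P) < 1 :=
    mem_valuationCenter.1 (hP ▸ Submodule.mem_span_singleton_self P)
  have hP0 : algebraMap A K P ≠ 0 := by
    rw [map_ne_zero_iff _ (FaithfulSMul.algebraMap_injective A K)]
    rintro rfl
    exact hne (by simpa using hP)
  refine ⟨e / algebraMap A K P, N, ?_, fun b hb hbv => ?_⟩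
  · have hev : v e = 1 := notMem_valuationCenter.1 he
    rwa [map_div₀, hev, one_div, ← map_inv₀, ← v.val_lt_one_iff hP0]
  · have heb := hN ⟨b, hb⟩ hbv
    rw [hP, Ideal.submodule_span_eq, Ideal.map_span, Set.image_singleton] at heb
    obtain ⟨d, hd⟩ := Ideal.mem_span_singleton'.1 heb
    have hdK : (d : K) * algebraMap A K P = e * b ^ N := congrArg (Subtype.val) hd
    rw [div_mul_eq_mul_div, ← hdK, mul_div_cancel_right₀ _ hP0]
    exact d.2

theorem exists_forall_le_one_iff [FaithfulSMul A K] [Ring.HasFiniteQuotients A]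
    [Algebra.IsAlgebraic A K]
    (hrank : Module.rank A K < Cardinal.aleph0) {hA : ∀ a : A, v (algebraMap A K a) ≤ 1}
    (hne : valuationCenter v hA ≠ ⊥) {c : ℕ} (hc : c ≠ 0)
    (hpow : ∀ h, v h = 1 → v (1 - h ^ c) < 1) :
    ∃ (w : K) (N : ℕ), ∀ S : Set K, (∀ x, IsIntegral A x → x ∈ S) → (∀ x ∈ S, v x ≤ 1) →
      ∀ x, v x ≤ 1 ↔ ∃ h ∈ S, h * x ∈ S ∧ w * (1 - h ^ c) ^ N ∈ S := by
  obtain ⟨w, N, hw, hwint⟩ := exists_forall_isIntegral_mul_pow hrank hne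
  refine ⟨w, N, fun S hIS hSO x => ⟨fun hx => ?_, ?_⟩⟩
  · obtain ⟨F, hF, i, hi⟩ := exists_aeval_eq_zero_and_coeff_notMem
      (Algebra.IsAlgebraic.isAlgebraic (R := A) x) (valuationCenter_isPrime (hR := hA)).ne_top
    obtain ⟨h, hh, a, hxa⟩ := exists_notMem_valuationCenter_mul_eq (R := integralClosure A K)
      (hR := fun b => le_one_of_isIntegral hA b.2) hx
      (F := F.map (algebraMap A (integralClosure A K))) ((aeval_map_algebraMap _ _ _).trans hF)
      ⟨i, by rwa [coeff_map]⟩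
    rw [notMem_valuationCenter] at hh
    exact ⟨h, hIS _ h.2, hxa ▸ hIS _ a.2,
      hIS _ (hwint _ (isIntegral_one.sub (h.2.pow c)) (hpow _ hh))⟩
  · rintro ⟨h, hh, hhx, hhw⟩
    have hvh : v h = 1 := by
      refine (hSO h hh).eq_of_not_lt fun hlt => (hSO _ hhw).not_gt ?_
      have hlt' : v (h ^ c) < 1 := by simpa only [map_pow] using pow_lt_one₀ zero_le hlt hc
      rwa [map_mul, map_pow, v.map_one_sub_of_lt hlt', one_pow, mul_one]
    simpa [hvh] using hSO _ hhx

theorem finite_residueField_of_rank_lt_aleph0 [FaithfulSMul A K] [Ring.HasFiniteQuotients A]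
    (hrank : Module.rank A K < Cardinal.aleph0) {hA : ∀ a : A, v (algebraMap A K a) ≤ 1}
    (hne : valuationCenter v hA ≠ ⊥) : Finite (IsLocalRing.ResidueField v.valuationSubring) := by
  let : Algebra A v.valuationSubring :=
    ((algebraMap A K).codRestrict v.valuationSubring hA).toAlgebra
  have : IsScalarTower A v.valuationSubring K := .of_algebraMap_eq fun _ => rfl
  have : (valuationCenter v hA).IsMaximal := valuationCenter_isPrime.isMaximal hne
  have := Ring.HasFiniteQuotients.finiteQuotient hne
  have : FaithfulSMul A v.valuationSubring := .tower_bot A v.valuationSubring K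
  have hrankO : Module.rank A v.valuationSubring < Cardinal.aleph0 :=
    ((IsScalarTower.toAlgHom A v.valuationSubring K).toLinearMap.rank_le_of_injective
      Subtype.val_injective).trans_lt hrank
  have := finite_quotient_map_of_rank_lt_aleph0 hrankO (valuationCenter v hA)
  have hle : (valuationCenter v hA).map (algebraMap A v.valuationSubring) ≤
      IsLocalRing.maximalIdeal v.valuationSubring :=
    Ideal.map_le_iff_le_comap.2 fun a ha => Ideal.mem_comap.2 (v.mem_maximalIdeal_iff.2 ha)
  exact Finite.of_surjective _ (Ideal.Quotient.factor_surjective hle)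

end ValuationCenter

section ResidueField

open IsLocalRing

theorem hasFiniteQuotients_polynomial (F : Type*) [Field F] [Finite F] :
    Ring.HasFiniteQuotients F[X] where
  finiteQuotient {I} hI := by
    obtain ⟨f, rfl⟩ := IsPrincipalIdealRing.principal I
    have hf : f ≠ 0 := by simpa using hI
    have : Module.Finite F (AdjoinRoot f) := (AdjoinRoot.powerBasis hf).finite
    exact (Module.finite_of_finite F : Finite (AdjoinRoot f))

section FiniteField

variable {F K Γ₀ : Type*} [Field F] [Field K] [Algebra F K]
  [LinearOrderedCommGroupWithZero Γ₀] {v : Valuation K Γ₀}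

theorem valuation_algebraMap_le_one [Finite F] (v : Valuation K Γ₀) (a : F) :
    v (algebraMap F K a) ≤ 1 :=
  le_one_of_isIntegral (R := ℤ) (fun n => intCast_mem v.integer n)
    ((Algebra.IsIntegral.isIntegral a).map (Algebra.ofId F K |>.restrictScalars ℤ))

theorem valuation_aeval_le_one [Finite F] {x : K} (hx : v x ≤ 1) (f : F[X]) :
    v (aeval x f) ≤ 1 := by
  rw [aeval_eq_sum_range]
  refine v.map_sum_le fun i _ => ?_
  rw [Algebra.smul_def, map_mul, map_pow]
  exact mul_le_one' (valuation_algebraMap_le_one v _) (pow_le_one' hx i)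

theorem transcendental_of_valuation_lt_one [Finite F] {x : K} (hx0 : x ≠ 0) (hx : v x < 1) :
    Transcendental F x := fun halg =>
  (le_one_of_isIntegral (valuation_algebraMap_le_one v) halg.inv.isIntegral).not_gt
    ((v.val_lt_one_iff hx0).1 hx)

variable [Algebra F[X] K] [IsScalarTower F F[X] K] [FaithfulSMul F[X] K]
  [Algebra.EssFiniteType F K]

theorem isAlgebraic_polynomial_of_trdeg_eq_one (htr : Algebra.trdeg F K = 1) :
    Algebra.IsAlgebraic F[X] K :=
  isAlgebraic_of_trdeg_eq F (by simp [htr, Polynomial.trdeg_of_isDomain])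

end FiniteField

variable {K Γ₀ : Type*} [Field K] [LinearOrderedCommGroupWithZero Γ₀] {v : Valuation K Γ₀}

theorem finite_residueField_of_trdeg_eq_one (F : Type*) [Field F] [Finite F] [Algebra F K]
    [Algebra.EssFiniteType F K] (htr : Algebra.trdeg F K = 1) {x : K} (hx0 : x ≠ 0)
    (hx : v x < 1) : Finite (ResidueField v.valuationSubring) := by
  let : Algebra F[X] K := (aeval x).toAlgebra
  have : IsScalarTower F F[X] K := .of_algebraMap_eq' (aeval x).comp_algebraMap.symm
  have : FaithfulSMul F[X] K := (faithfulSMul_iff_algebraMap_injective _ _).2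
    (transcendental_iff_injective.1 (transcendental_of_valuation_lt_one hx0 hx))
  have := isAlgebraic_polynomial_of_trdeg_eq_one (F := F) htr
  have : Algebra.EssFiniteType F[X] K := .of_comp F _ _
  have := hasFiniteQuotients_polynomial F
  have hX : X ∈ valuationCenter v (R := F[X]) (valuation_aeval_le_one (F := F) hx.le) :=
    mem_valuationCenter.2 ((congrArg v (aeval_X x)).trans_lt hx)
  exact finite_residueField_of_rank_lt_aleph0 (rank_lt_aleph0_of_isAlgebraic F[X] K)
    (Submodule.ne_bot_iff _ |>.2 ⟨X, hX, X_ne_zero⟩)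

theorem residue_eq_zero_iff_valuation_lt_one {a : v.valuationSubring} :
    residue v.valuationSubring a = 0 ↔ v a < 1 := by
  rw [residue_eq_zero_iff, v.mem_maximalIdeal_iff]

theorem charP_residueField (p : ℕ) [Fact p.Prime] [CharP K p] :
    CharP (ResidueField v.valuationSubring) p := by
  rw [CharP.charP_iff_prime_eq_zero Fact.out, ← map_natCast (residue v.valuationSubring),
    residue_eq_zero_iff_valuation_lt_one]
  simp

variable [Finite (ResidueField v.valuationSubring)]

theorem valuation_pow_card_residueField_pow_sub_lt_one {x : K} (hx : v x ≤ 1) (n : ℕ) :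
    v (x ^ Nat.card (ResidueField v.valuationSubring) ^ n - x) < 1 := by
  have := Fintype.ofFinite (ResidueField v.valuationSubring)
  have h : residue v.valuationSubring
      (⟨x, hx⟩ ^ Nat.card (ResidueField v.valuationSubring) ^ n - ⟨x, hx⟩) = 0 := by
    rw [map_sub, map_pow, Nat.card_eq_fintype_card, FiniteField.pow_card_pow, sub_self]
  exact residue_eq_zero_iff_valuation_lt_one.1 h

theorem valuation_one_sub_pow_lt_one {h : K} (hh : v h = 1) :
    v (1 - h ^ (Nat.card (ResidueField v.valuationSubring) - 1)) < 1 := by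
  obtain ⟨c, hc⟩ := Nat.exists_eq_succ_of_ne_zero
    (Nat.card_pos (α := ResidueField v.valuationSubring)).ne'
  have hmul := valuation_pow_card_residueField_pow_sub_lt_one hh.le 1
  rw [hc, pow_one, pow_succ, ← sub_one_mul, map_mul, hh, mul_one, v.map_sub_swap] at hmul
  rwa [hc, Nat.succ_sub_one]

theorem exists_forall_le_one_valuation_add_sub_pow_eq_one (p : ℕ) [Fact p.Prime] [CharP K p] :
    ∃ s, v s ≤ 1 ∧ ∀ u, v u ≤ 1 → v (s + u - u ^ p) = 1 := by
  have := charP_residueField (v := v) p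
  obtain ⟨b, hb⟩ : ∃ b : ResidueField v.valuationSubring, ∀ a, a ^ p - a ≠ b := by
    by_contra! hsurj
    have hinj : Function.Injective fun a : ResidueField v.valuationSubring => a ^ p - a :=
      Finite.injective_iff_surjective.2 hsurj
    have hp : p ≠ 0 := (Fact.out : p.Prime).ne_zero
    exact zero_ne_one (hinj (a₁ := 0) (a₂ := 1) (by simp [hp]))
  obtain ⟨s, rfl⟩ := residue_surjective b
  refine ⟨s, s.2, fun u hu => ?_⟩
  have hmem (t : v.valuationSubring) : v (t : K) = 1 ↔ residue v.valuationSubring t ≠ 0 := by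
    rw [Ne, residue_eq_zero_iff_valuation_lt_one, not_lt, t.2.ge_iff_eq]
  refine (hmem (s + ⟨u, hu⟩ - ⟨u, hu⟩ ^ p)).2 fun h0 => hb (residue _ ⟨u, hu⟩) ?_
  rw [map_sub, map_add, map_pow] at h0
  linear_combination -h0

theorem map_pow_sub_eq_one_or {V : AddValuation K (WithTop ℤ)} {p k : ℕ} [Fact p.Prime] [CharP K p]
    (hk : 1 < p ^ k) {s x : K} (hs : 0 < V (s ^ p ^ k - s)) (hx : V x = 1) :
    V (s ^ p ^ k - s) = 1 ∨ V ((s + x) ^ p ^ k - (s + x)) = 1 := by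
  refine or_iff_not_imp_left.2 fun hne => ?_
  have hs1 : 1 < V (s ^ p ^ k - s) := by
    refine lt_of_le_of_ne ?_ (Ne.symm hne)
    cases hV : V (s ^ p ^ k - s) with
    | top => exact le_top
    | coe n =>
      rw [hV] at hs
      exact_mod_cast (Int.add_one_le_iff.2 (by exact_mod_cast hs) : 0 + 1 ≤ n)
  have hx1 : V (x ^ p ^ k - x) = 1 := by
    rw [← hx]
    refine V.map_sub_eq_of_lt_right ?_
    rw [V.map_pow, hx, nsmul_one]
    exact_mod_cast hk
  rw [add_pow_char_pow, add_sub_add_comm, V.map_add_eq_of_lt_right (hx1 ▸ hs1), hx1]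

theorem exists_map_pow_sub_eq_one {V : AddValuation K (WithTop ℤ)} {x : K}
    (hx : V x = 1) [Finite (ResidueField V.toValuation.valuationSubring)]
    (p : ℕ) [Fact p.Prime] [CharP K p] :
    ∃ (s : K) (Q : ℕ), p ∣ Q ∧ 3 ≤ Q ∧ 0 ≤ V s ∧ V (s ^ Q - s) = 1 ∧
      ∀ u, 0 ≤ V u → V (s + u - u ^ p) = 0 := by
  have := charP_residueField (v := V.toValuation) p
  have := Fintype.ofFinite (ResidueField V.toValuation.valuationSubring)
  obtain ⟨s, hs, hsu⟩ := exists_forall_le_one_valuation_add_sub_pow_eq_one (v := V.toValuation) p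
  obtain ⟨m, -, hm⟩ := FiniteField.card (ResidueField V.toValuation.valuationSubring) p
  obtain ⟨Q, hQ⟩ : ∃ Q, Q = Nat.card (ResidueField V.toValuation.valuationSubring) ^ 2 := ⟨_, rfl⟩
  have hQm : Q = p ^ (m * 2 : ℕ) := by rw [hQ, Nat.card_eq_fintype_card, hm, pow_mul]
  have hQ3 : 3 ≤ Q := by
    have := Finite.one_lt_card (α := ResidueField V.toValuation.valuationSubring)
    nlinarith
  have hV : 0 < V (s ^ Q - s) :=
    hQ ▸ valuation_pow_card_residueField_pow_sub_lt_one (v := V.toValuation) hs 2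
  have hpQ : p ∣ Q := hQm ▸ dvd_pow_self p (by positivity)
  have hVx : 0 < V x := hx ▸ zero_lt_one
  rcases map_pow_sub_eq_one_or (by lia) (hQm ▸ hV) hx with h1 | h1
  · exact ⟨s, Q, hpQ, hQ3, hs, hQm ▸ h1, hsu⟩
  · refine ⟨s + x, Q, hpQ, hQ3, V.map_le_add hs hVx.le, hQm ▸ h1, fun u hu => ?_⟩
    have hsu0 : V (s + u - u ^ p) = 0 := hsu u hu
    rw [add_right_comm, add_sub_right_comm, V.map_add_eq_of_lt_left (hsu0 ▸ hVx), hsu0]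

end ResidueField

/-! ### Diophantine subsets of the valuation ring -/

section ThetaSum

variable (p : ℕ) [Fact p.Prime] {K : Type*} [Field K] [CharP K p]

/-- The multiple `π ^ 2 * x ^ 3` of the cube of `x` is a sum of two theta quotients. This condition
still confines `x` to the valuation ring of a prime with uniformizer `π`, and it holds for all
polynomials in `c` when `π = c ^ Q - c`. -/
def IsThetaSum (π c x : K) : Prop :=
  ∃ z₀ z₁, IsThetaQuotient p π c z₀ ∧ IsThetaQuotient p π c z₁ ∧ π ^ 2 * x ^ 3 = z₀ + z₁

variable {p}

theorem IsThetaSum.nonneg {V : AddValuation K (WithTop ℤ)} {π c x : K} (hπ : V π = 1)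
    (hc : 0 ≤ V c) (hcn : ∀ u, 0 ≤ V u → V (c + u - u ^ p) ≤ 0) (h : IsThetaSum p π c x) :
    0 ≤ V x := by
  obtain ⟨z₀, z₁, h₀, h₁, h⟩ := h
  have hle : 0 ≤ V (π ^ 2 * x ^ 3) :=
    h ▸ V.map_le_add (h₀.nonneg hπ hc hcn) (h₁.nonneg hπ hc hcn)
  rw [V.map_mul, V.map_pow, V.map_pow, hπ] at hle
  induction hx : V x with
  | top => exact le_top
  | coe n =>
    rw [hx, nsmul_one, ← WithTop.coe_nsmul, nsmul_eq_mul] at hle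
    have hle' : 0 ≤ 2 + 3 * n := WithTop.coe_le_coe.1 hle
    exact_mod_cast (by lia : 0 ≤ n)

theorem isThetaSum_aeval [Algebra (ZMod p) K] {s : K} (hs : Transcendental (ZMod p) s) {Q : ℕ}
    (hpQ : p ∣ Q) (hQ : 3 ≤ Q) (a : (ZMod p)[X]) : IsThetaSum p (s ^ Q - s) s (aeval s a) := by
  obtain ⟨k, rfl⟩ := hpQ
  have hX : (X ^ k : (ZMod p)[X]) ^ p - X = X ^ (p * k) - X := by rw [← pow_mul, mul_comm]
  have hmem (A : (ZMod p)[X]) (hA : IsCoprime A (X ^ (p * k) - X)) :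
      IsThetaQuotient p (s ^ (p * k) - s) s ((s ^ (p * k) - s) * aeval s A) := by
    have h := isThetaQuotient_aeval_mul (g := X ^ k) hs (by rwa [natDegree_X_pow]) (hX ▸ hA)
    simpa only [hX, map_mul, map_sub, map_pow, aeval_X] using h
  -- `π² a³ = π (π a³ - 1) + π`
  refine ⟨_, _, hmem ((X ^ (p * k) - X) * a ^ 3 - 1) ⟨-1, a ^ 3, by ring⟩,
    hmem 1 isCoprime_one_left, ?_⟩
  simp only [map_sub, map_mul, map_pow, aeval_X, map_one]
  ring

end ThetaSum

section MonicRoots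

/-- The roots of the monic polynomials of degree `n` whose remaining coefficients lie in `S`. -/
def monicRoots {R : Type*} [CommRing R] (n : ℕ) (S : Set R) : Set R :=
  {a | ∃ f : Fin n → R, (∀ i, f i ∈ S) ∧ a ^ n + ∑ i, f i * a ^ (i : ℕ) = 0}

theorem le_one_of_mem_monicRoots {K Γ₀ : Type*} [Field K] [LinearOrderedCommGroupWithZero Γ₀]
    {v : Valuation K Γ₀} {n : ℕ} {S : Set K} (hS : ∀ x ∈ S, v x ≤ 1) {a : K}
    (ha : a ∈ monicRoots n S) : v a ≤ 1 := by
  obtain ⟨f, hf, h⟩ := ha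
  lift f to Fin n → v.integer using fun i => hS _ (hf i)
  refine le_one_of_isIntegral (R := v.integer) (fun r => r.2)
    ⟨X ^ n + ∑ i, C (f i) * X ^ (i : ℕ), monic_X_pow_add (degree_sum_fin_lt f), ?_⟩
  simp only [eval₂_add, eval₂_X_pow, eval₂_finsetSum, eval₂_mul, eval₂_C]
  exact h

variable {A K : Type*} [CommRing A] [IsDomain A] [IsIntegrallyClosed A] [Field K] [Algebra A K]
  [FaithfulSMul A K]

theorem exists_monic_natDegree_eq_of_isIntegral (hrank : Module.rank A K < Cardinal.aleph0) {x : K}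
    (hx : IsIntegral A x) :
    ∃ f : A[X], f.Monic ∧ f.natDegree = Module.finrank A K ∧ aeval x f = 0 := by
  let : Algebra (FractionRing A) K := FractionRing.liftAlgebra _ _
  have := FractionRing.isScalarTower_liftAlgebra A K
  rw [← IsFractionRing.rank_right_eq (S := FractionRing A), Module.rank_lt_aleph0_iff] at hrank
  have hmonic := minpoly.monic hx
  have hle : (minpoly A x).natDegree ≤ Module.finrank A K := by
    rw [← IsFractionRing.finrank_right_eq (S := FractionRing A),
      ← hmonic.natDegree_map (algebraMap A (FractionRing A)),
      ← minpoly.isIntegrallyClosed_eq_field_fractions' (FractionRing A) hx]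
    exact minpoly.natDegree_le x
  refine ⟨minpoly A x * X ^ (Module.finrank A K - (minpoly A x).natDegree),
    hmonic.mul (monic_X_pow _), ?_, by simp⟩
  rw [hmonic.natDegree_mul (monic_X_pow _), natDegree_X_pow, Nat.add_sub_cancel' hle]

theorem mem_monicRoots_finrank (hrank : Module.rank A K < Cardinal.aleph0) {S : Set K}
    (hS : ∀ a, algebraMap A K a ∈ S) {x : K} (hx : IsIntegral A x) :
    x ∈ monicRoots (Module.finrank A K) S := by
  obtain ⟨f, hf, hdeg, h⟩ := exists_monic_natDegree_eq_of_isIntegral hrank hx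
  refine ⟨fun i => algebraMap A K (f.coeff i), fun i => hS _, ?_⟩
  rw [← hdeg, Fin.sum_univ_eq_sum_range (fun i => algebraMap A K (f.coeff i) * x ^ i), add_comm]
  simpa [aeval_eq_sum_range, Finset.sum_range_succ, Algebra.smul_def, hf.coeff_natDegree] using h

end MonicRoots

section Diophantine

open MvPolynomial (eval rename bind₁)

variable {R σ : Type*} [CommRing R]

/-- A set of `σ`-tuples is diophantine if it is the projection of the set of common zeros of
finitely many polynomials in finitely many further variables. -/
def IsDiophantine (S : Set (σ → R)) : Prop :=
  ∃ (τ : Type) (_ : Finite τ) (ι : Type) (_ : Finite ι) (P : ι → MvPolynomial (σ ⊕ τ) R),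
    ∀ x, x ∈ S ↔ ∃ y : τ → R, ∀ i, eval (Sum.elim x y) (P i) = 0

/-- A subset of `R` is diophantine if it is so as a set of `1`-tuples. -/
def IsDiophantine₁ (S : Set R) : Prop :=
  IsDiophantine {x : Unit → R | x () ∈ S}

theorem isDiophantine_eval_eq (P Q : MvPolynomial σ R) :
    IsDiophantine {x | eval x P = eval x Q} := by
  refine ⟨Empty, inferInstance, Unit, inferInstance, fun _ => rename Sum.inl (P - Q), fun x => ?_⟩
  simp [MvPolynomial.eval_rename, sub_eq_zero]

theorem isDiophantine_forall {α : Type} [Finite α] {S : α → Set (σ → R)}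
    (h : ∀ a, IsDiophantine (S a)) : IsDiophantine {x | ∀ a, x ∈ S a} := by
  choose τ hτ ι hι P hP using h
  refine ⟨Σ a, τ a, inferInstance, Σ a, ι a, inferInstance,
    fun ai => rename (Sum.map id (Sigma.mk ai.1)) (P ai.1 ai.2), fun x => ?_⟩
  simp only [MvPolynomial.eval_rename, Sum.elim_comp_map, Function.comp_id, Sigma.forall,
    Set.mem_ofPred_eq, hP, Classical.skolem]
  exact (Equiv.piCurry fun a (_ : τ a) => R).symm.exists_congr fun y => Iff.rfl

namespace IsDiophantine

theorem inter {S T : Set (σ → R)} (hS : IsDiophantine S) (hT : IsDiophantine T) :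
    IsDiophantine (S ∩ T) := by
  have h := isDiophantine_forall (S := fun b => bif b then S else T) (Bool.forall_bool.2 ⟨hT, hS⟩)
  simpa only [Set.ofPred_forall, Set.ofPred_mem_eq, ← Set.inter_eq_iInter] using h

theorem exists_fun {τ : Type} [Finite τ] {S : Set (σ ⊕ τ → R)} (hS : IsDiophantine S) :
    IsDiophantine {x : σ → R | ∃ z : τ → R, Sum.elim x z ∈ S} := by
  obtain ⟨τ', hτ', ι, hι, P, hP⟩ := hS
  refine ⟨τ ⊕ τ', inferInstance, ι, hι, fun i => rename (Equiv.sumAssoc σ τ τ') (P i), fun x => ?_⟩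
  have hassoc (z : τ → R) (y : τ' → R) :
      Sum.elim x (Sum.elim z y) ∘ Equiv.sumAssoc σ τ τ' = Sum.elim (Sum.elim x z) y := by
    ext ((_ | _) | _) <;> rfl
  simp only [Set.mem_ofPred_eq, hP, MvPolynomial.eval_rename]
  rw [(Equiv.sumArrowEquivProdArrow τ τ' R).symm.surjective.exists, Prod.exists]
  simp only [Equiv.sumArrowEquivProdArrow, Equiv.coe_fn_symm_mk, hassoc]

theorem exists_elem {S : Set (σ ⊕ Unit → R)} (hS : IsDiophantine S) :
    IsDiophantine {x : σ → R | ∃ z : R, Sum.elim x (fun _ => z) ∈ S} := by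
  have h := hS.exists_fun
  simp only [(Equiv.funUnique Unit R).symm.surjective.exists] at h
  exact h

end IsDiophantine

theorem IsDiophantine₁.preimage_eval {S : Set R} (hS : IsDiophantine₁ S) (g : MvPolynomial σ R) :
    IsDiophantine {x | eval x g ∈ S} := by
  obtain ⟨τ, hτ, ι, hι, P, hP⟩ := hS
  refine ⟨τ, hτ, ι, hι, fun i => bind₁ (Sum.elim (fun _ => rename Sum.inl g)
    (fun t => MvPolynomial.X (Sum.inr t))) (P i), fun x => ?_⟩
  refine (hP fun _ => eval x g).trans (exists_congr fun y => forall_congr' fun i => ?_)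
  simp_rw [← MvPolynomial.aeval_eq_eval, MvPolynomial.aeval_bind₁]
  congr! 3
  ext (_ | _) <;> simp [MvPolynomial.aeval_rename]

theorem isDiophantine_eval_ne_zero {K : Type*} [Field K] (P : MvPolynomial σ K) :
    IsDiophantine {x | eval x P ≠ 0} := by
  have h := (isDiophantine_eval_eq (rename Sum.inl P * MvPolynomial.X (Sum.inr ())) 1).exists_elem
  simpa [MvPolynomial.eval_rename, ← isUnit_iff_exists_inv] using h

theorem IsDiophantine₁.existDefinable {R : Type} [CommRing R] {S : Set R} (hS : IsDiophantine₁ S) :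
    ExistDefinable S := by
  obtain ⟨τ, hτ, ι, hι, P, hP⟩ := hS
  obtain ⟨k, ⟨e⟩⟩ := Finite.exists_equiv_fin τ
  obtain ⟨m, ⟨d⟩⟩ := Finite.exists_equiv_fin ι
  refine ⟨k, m, fun i => rename (Sum.elim (fun _ => 0) (Fin.succ ∘ e)) (P (d.symm i)), fun x => ?_⟩
  have hcons (y : Fin k → R) : (Fin.cons x y : Fin (k + 1) → R) ∘
      Sum.elim (fun _ => 0) (Fin.succ ∘ e) = Sum.elim (fun _ : Unit => x) (y ∘ e) := by
    ext (_ | _) <;> simp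
  simp only [MvPolynomial.eval_rename, hcons]
  refine (hP fun _ => x).trans ((e.arrowCongr (.refl R)).exists_congr fun y => ?_)
  simp [Function.comp_def, d.symm.forall_congr_left]

end Diophantine

section DiophantineSets

variable {K : Type*} [Field K]

theorem isDiophantine₁_monicRoots {S : Set K} (hS : IsDiophantine₁ S) (n : ℕ) :
    IsDiophantine₁ (monicRoots n S) := by
  have hcoeff : IsDiophantine {x : Unit ⊕ Fin n → K | ∀ i, x (Sum.inr i) ∈ S} :=
    isDiophantine_forall (S := fun i => {x | x (Sum.inr i) ∈ S}) fun i => by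
      simpa using hS.preimage_eval (.X (Sum.inr i))
  have hroot := isDiophantine_eval_eq (R := K) (.X (Sum.inl ()) ^ n + ∑ i : Fin n,
    .X (Sum.inr i) * .X (Sum.inl ()) ^ (i : ℕ) : MvPolynomial (Unit ⊕ Fin n) K) 0
  simpa [IsDiophantine₁, monicRoots, Set.inter_def] using (hcoeff.inter hroot).exists_fun

theorem isDiophantine₁_exists_mem_mul {S : Set K} (hS : IsDiophantine₁ S) (f : K[X]) :
    IsDiophantine₁ {x | ∃ h ∈ S, h * x ∈ S ∧ f.eval h ∈ S} := by
  let h : MvPolynomial (Unit ⊕ Unit) K := .X (Sum.inr ())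
  have hf := hS.preimage_eval (aeval h f)
  have hmul := hS.preimage_eval (h * .X (Sum.inl ()))
  have hand := ((hS.preimage_eval h).inter (hmul.inter hf)).exists_elem
  have heval (y : Unit ⊕ Unit → K) : MvPolynomial.eval y (aeval h f) = f.eval (y (Sum.inr ())) := by
    rw [← MvPolynomial.aeval_eq_eval, ← aeval_algHom_apply]
    simp [h]
  simpa [IsDiophantine₁, h, Set.inter_def, heval] using hand

theorem isDiophantine₁_isThetaQuotient (p : ℕ) [Fact p.Prime] [CharP K p] (π c : K) :
    IsDiophantine₁ {x | IsThetaQuotient p π c x} := by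
  let x : MvPolynomial (((Unit ⊕ Fin p) ⊕ Fin p) ⊕ Unit) K := .X (.inl (.inl (.inl ())))
  let t (i) : MvPolynomial (((Unit ⊕ Fin p) ⊕ Fin p) ⊕ Unit) K := .X (.inl (.inl (.inr i)))
  let w (i) : MvPolynomial (((Unit ⊕ Fin p) ⊕ Fin p) ⊕ Unit) K := .X (.inl (.inr i))
  let u : MvPolynomial (((Unit ⊕ Fin p) ⊕ Fin p) ⊕ Unit) K := .X (.inr ())
  have hne := isDiophantine_eval_ne_zero (∑ i : Fin p, .C (π ^ (i : ℕ)) * t i ^ p)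
  have heq := isDiophantine_eval_eq (∑ i : Fin p, .C ((i : ℕ) * π ^ (i : ℕ)) * t i ^ p)
    (x * (∑ i : Fin p, .C (π ^ (i : ℕ)) * t i ^ p) *
      (.C c + u - u ^ p + ∑ i : Fin p, .C ((i : ℕ) * π ^ (i : ℕ)) * w i ^ p))
  have h := (hne.inter heq).exists_elem.exists_fun.exists_fun
  simpa [IsDiophantine₁, IsThetaQuotient, pExpansion_apply, thetaExpansion_apply, x, t, u, w,
    mul_assoc] using h

theorem isDiophantine₁_isThetaSum (p : ℕ) [Fact p.Prime] [CharP K p] (π c : K) :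
    IsDiophantine₁ {x | IsThetaSum p π c x} := by
  let x : MvPolynomial ((Unit ⊕ Unit) ⊕ Unit) K := .X (.inl (.inl ()))
  let z₀ : MvPolynomial ((Unit ⊕ Unit) ⊕ Unit) K := .X (.inl (.inr ()))
  let z₁ : MvPolynomial ((Unit ⊕ Unit) ⊕ Unit) K := .X (.inr ())
  have h₀ := (isDiophantine₁_isThetaQuotient p π c).preimage_eval z₀
  have h₁ := (isDiophantine₁_isThetaQuotient p π c).preimage_eval z₁
  have heq := isDiophantine_eval_eq (.C (π ^ 2) * x ^ 3) (z₀ + z₁)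
  have h := (h₀.inter (h₁.inter heq)).exists_elem.exists_elem
  simpa [IsDiophantine₁, IsThetaSum, x, z₀, z₁] using h

end DiophantineSets

section ValuationRing

theorem isDiophantine₁_le_one {F K Γ₀ : Type*} [Field F] [Finite F] [Field K] [Algebra F K]
    [Algebra.EssFiniteType F K] [LinearOrderedCommGroupWithZero Γ₀] {v : Valuation K Γ₀}
    (htr : Algebra.trdeg F K = 1) {s : K} (hs : v s ≤ 1) {f : F[X]} (hf0 : aeval s f ≠ 0)
    (hf : v (aeval s f) < 1) {S : Set K} (hS : IsDiophantine₁ S) (hmem : ∀ a : F[X], aeval s a ∈ S)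
    (hle : ∀ x ∈ S, v x ≤ 1) : IsDiophantine₁ {x | v x ≤ 1} := by
  let : Algebra F[X] K := (aeval s).toAlgebra
  have : IsScalarTower F F[X] K := .of_algebraMap_eq' (aeval s).comp_algebraMap.symm
  have hst : Transcendental F s :=
    (transcendental_aeval_iff.1 (transcendental_of_valuation_lt_one hf0 hf)).1
  have : FaithfulSMul F[X] K := (faithfulSMul_iff_algebraMap_injective _ _).2
    (transcendental_iff_injective.1 hst)
  have := isAlgebraic_polynomial_of_trdeg_eq_one (F := F) htr
  have : Algebra.EssFiniteType F[X] K := .of_comp F _ _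
  have := hasFiniteQuotients_polynomial F
  have := finite_residueField_of_trdeg_eq_one F htr hf0 hf
  have hrank := rank_lt_aleph0_of_isAlgebraic F[X] K
  have hcenter : valuationCenter v (R := F[X]) (valuation_aeval_le_one (F := F) hs) ≠ ⊥ :=
    (Submodule.ne_bot_iff _).2 ⟨f, hf, fun h => hf0 (by rw [h, map_zero])⟩
  obtain ⟨w, N, h⟩ := exists_forall_le_one_iff hrank hcenter
    (Nat.sub_ne_zero_of_lt (Finite.one_lt_card (α := IsLocalRing.ResidueField v.valuationSubring)))
    fun _ => valuation_one_sub_pow_lt_one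
  have hdio := isDiophantine₁_exists_mem_mul (isDiophantine₁_monicRoots hS (Module.finrank F[X] K))
    (C w * (1 - X ^ (Nat.card (IsLocalRing.ResidueField v.valuationSubring) - 1)) ^ N)
  convert hdio with x
  simpa using h _ (fun x => mem_monicRoots_finrank hrank hmem)
    (fun x => le_one_of_mem_monicRoots hle) x

theorem isDiophantine₁_nonneg {p : ℕ} [Fact p.Prime] {K : Type*} [Field K] [Algebra (ZMod p) K]
    [Algebra.EssFiniteType (ZMod p) K] (htr : Algebra.trdeg (ZMod p) K = 1)
    (V : AddValuation K (WithTop ℤ)) (hV : ∃ x, V x = 1) : IsDiophantine₁ {x | 0 ≤ V x} := by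
  have : CharP K p := charP_of_injective_algebraMap (algebraMap (ZMod p) K).injective p
  obtain ⟨x, hx⟩ := hV
  have hpos {y : K} (hy : V y = 1) : y ≠ 0 ∧ V.toValuation y < 1 :=
    ⟨fun h => by simp [h] at hy, (zero_lt_one.trans_eq hy.symm : 0 < V y)⟩
  have := finite_residueField_of_trdeg_eq_one (ZMod p) htr (hpos hx).1 (hpos hx).2
  obtain ⟨s, Q, hpQ, hQ, hs, hπ, hsu⟩ := exists_map_pow_sub_eq_one hx p
  have haeval : aeval s (X ^ Q - X : (ZMod p)[X]) = s ^ Q - s := by simp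
  have hst : Transcendental (ZMod p) s := (transcendental_aeval_iff.1
    (haeval ▸ transcendental_of_valuation_lt_one (hpos hπ).1 (hpos hπ).2)).1
  exact isDiophantine₁_le_one (v := V.toValuation) htr hs (haeval ▸ (hpos hπ).1)
    (haeval ▸ (hpos hπ).2) (isDiophantine₁_isThetaSum p (s ^ Q - s) s)
    (isThetaSum_aeval hst hpQ hQ) fun x => IsThetaSum.nonneg hπ hs fun u hu => (hsu u hu).le

end ValuationRing

theorem statement8_general (p : ℕ) [Fact p.Prime] (K : Type) [Field K]
    [Algebra (RatFunc (ZMod p)) K] [FiniteDimensional (RatFunc (ZMod p)) K] (v : FFPrime K) :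
    ExistDefinable {x : K | 0 ≤ v.ord x} := by
  let : Algebra (ZMod p) K := ((algebraMap (RatFunc (ZMod p)) K).comp (algebraMap _ _)).toAlgebra
  have : IsScalarTower (ZMod p) (RatFunc (ZMod p)) K := .of_algebraMap_eq' rfl
  have := essFiniteType_of_finiteDimensional_ratFunc (ZMod p) K
  exact (isDiophantine₁_nonneg (trdeg_eq_one_of_finiteDimensional_ratFunc (ZMod p) K)
    (.of v.ord v.ord_zero v.ord_one v.ord_add v.ord_mul) (v.ord_surj 1)).existDefinable

/-- The valuation ring of any prime of a global function field `K`
containing a primitive `q`-th root of unity (`q ≠ char K` prime) is existentially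
(diophantine) definable over `K`. -/
theorem statement8 (p q : ℕ) [Fact p.Prime] (hq : q.Prime) (hqp : q ≠ p)
    (K : Type) [Field K] [Algebra (RatFunc (ZMod p)) K]
    [FiniteDimensional (RatFunc (ZMod p)) K]
    (ζ : K) (hζ : IsPrimitiveRoot ζ q)
    (v : FFPrime K) :
    ExistDefinable {x : K | 0 ≤ v.ord x} :=
  statement8_general p K v
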